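/- Let N ≥ 1 and let λ_1 > μ_1 > λ_2 > μ_2 > … > λ_N > μ_N > 0 be real numbers. Then the set of all c ∈ h^{1/2} such that Γ_c has rank N with positive singular values exactly λ_1, …, λ_N, each simple, and Γ̃_c has rank N with positive singular values exactly μ_1, …, μ_N, each simple, endowed with the topology induced by the h^{1/2} norm, is homeomorphic to the 2N-dimensional torus 𝕋^{2N}, where 𝕋 := ℝ/2πℤ. -/

import Mathlib

open scoped InnerProductSpace ComplexConjugate ENNReal

noncomputable section

/-- The Hilbert space `ℓ²(ℕ, ℂ)`. -/
abbrev L2 : Type := lp (fun _ : ℕ => ℂ) 2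

/-- Membership in the space `h^{1/2}`: `c ∈ ℓ²` and `Σ n |c_n|² < ∞`. -/
def InH12 (c : ℕ → ℂ) : Prop :=
  Memℓp c 2 ∧ Summable (fun n : ℕ => (n : ℝ) * ‖c n‖ ^ 2)

/-- `Γ` is the Hankel operator of symbol `c`: `(Γ x)_n = Σ_p c_{n+p} x_p`. -/
def IsHankelOp (c : ℕ → ℂ) (Γ : L2 →L[ℂ] L2) : Prop :=
  ∀ x : L2, ∀ n : ℕ, (Γ x : ℕ → ℂ) n = ∑' p : ℕ, c (n + p) * (x : ℕ → ℂ) p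

/-- The shifted sequence `c̃ : n ↦ c_{n+1}`. -/
def shiftSeq (c : ℕ → ℂ) : ℕ → ℂ := fun n => c (n + 1)

/-- The operator `Γ Γ*`. -/
def opT (Γ : L2 →L[ℂ] L2) : L2 →L[ℂ] L2 :=
  Γ ∘L ContinuousLinearMap.adjoint Γ

/-- `e₀ = (1,0,0,…) ∈ ℓ²`. -/
def e0 : L2 := lp.single 2 0 1

/-- Generic min–max value `a_j` (for `j ≥ 1`) of a bounded operator `T` on a Hilbert space:
the infimum over subspaces `F` of dimension at most `j-1` of the supremum of `Re ⟨T h, h⟩`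
over unit vectors `h` orthogonal to `F`. -/
def minmaxVal {H : Type*} [NormedAddCommGroup H] [InnerProductSpace ℂ H]
    (T : H →L[ℂ] H) (j : ℕ) : ℝ :=
  ⨅ F : {F : Submodule ℂ H // Module.finrank ℂ F ≤ j - 1},
    ⨆ h : {h : H // ‖h‖ = 1 ∧ ∀ y ∈ F.1, ⟪y, h⟫_ℂ = 0},
      (⟪T h.1, h.1⟫_ℂ).re

/-- `λ_j(Γ)²` (for `j ≥ 1`): the `j`-th min–max value of `Γ Γ*`. -/
def svalSq (Γ : L2 →L[ℂ] L2) (j : ℕ) : ℝ := minmaxVal (opT Γ) j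

lemma summable_sq_of_memℓp {f : ℕ → ℂ} (hf : Memℓp f 2) :
    Summable fun n : ℕ => ‖f n‖ ^ 2 := by
  have h := hf.summable (p := 2) (by norm_num)
  have h2 : ((2 : ℝ≥0∞).toReal) = ((2 : ℕ) : ℝ) := by norm_num
  rw [h2] at h
  simpa [Real.rpow_natCast] using h

/-- The weighted sequence `n ↦ √(1+n) · c_n`, whose `ℓ²` norm is the `h^{1/2}` norm of `c`. -/
def wSeq (c : ℕ → ℂ) : ℕ → ℂ := fun n => (Real.sqrt (1 + (n : ℝ)) : ℂ) * c n

lemma memℓp_wSeq {c : ℕ → ℂ} (hc : InH12 c) : Memℓp (wSeq c) 2 := by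
  apply memℓp_gen
  have h2 : ((2 : ℝ≥0∞).toReal) = ((2 : ℕ) : ℝ) := by norm_num
  rw [h2]
  have hs : Summable fun n : ℕ => (1 + (n : ℝ)) * ‖c n‖ ^ 2 := by
    have := (summable_sq_of_memℓp hc.1).add hc.2
    convert this using 2 with n
    ring
  have key : ∀ n : ℕ, ‖wSeq c n‖ ^ ((2 : ℕ) : ℝ) = (1 + (n : ℝ)) * ‖c n‖ ^ 2 := by
    intro n
    rw [Real.rpow_natCast]
    have h1 : (0 : ℝ) ≤ 1 + (n : ℝ) := by positivity
    simp only [wSeq, norm_mul, Complex.norm_real, Real.norm_eq_abs,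
      abs_of_nonneg (Real.sqrt_nonneg _)]
    rw [mul_pow, Real.sq_sqrt h1]
  exact (summable_congr fun n => key n).mpr hs

/-- The space `h^{1/2}` as a type. -/
def H12 : Type := {c : ℕ → ℂ // InH12 c}

/-- The isometric embedding of `h^{1/2}` into `ℓ²` given by `c ↦ (√(1+n) c_n)_n`;
the `h^{1/2}` norm of `c` is the `ℓ²` norm of its image. -/
def H12.toL2 (c : H12) : L2 := ⟨wSeq c.1, memℓp_wSeq c.2⟩

lemma H12.toL2_injective : Function.Injective H12.toL2 := by
  intro c d h
  apply Subtype.ext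
  funext n
  have h' : wSeq c.1 n = wSeq d.1 n := congrFun (congrArg Subtype.val h) n
  have hs : (Real.sqrt (1 + (n : ℝ)) : ℂ) ≠ 0 := by
    simp only [ne_eq, Complex.ofReal_eq_zero]
    positivity
  exact mul_left_cancel₀ hs h'

/-- The metric (hence the topology) on `h^{1/2}` induced by the `h^{1/2}` norm
`(Σ (1+n)|c_n|²)^{1/2}`, obtained from the isometric embedding into `ℓ²`. -/
instance : MetricSpace H12 := MetricSpace.induced H12.toL2 H12.toL2_injective inferInstance

/-- `Γ` has rank `N` and its positive singular values are exactly `λ_1, …, λ_N`, each simple: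
equivalently, `Γ Γ*` has positive eigenvalues exactly the `λ_j²`, each with a
one-dimensional eigenspace. -/
def HasSimpleSVals (Γ : L2 →L[ℂ] L2) (N : ℕ) (lam : Fin N → ℝ) : Prop :=
  LinearMap.rank Γ.toLinearMap = N ∧
  {z : ℂ | z ≠ 0 ∧ Module.End.HasEigenvalue (opT Γ).toLinearMap z}
    = Set.range (fun j : Fin N => ((lam j : ℂ)) ^ 2) ∧
  ∀ j : Fin N,
    Module.finrank ℂ (Module.End.eigenspace (opT Γ).toLinearMap ((lam j : ℂ) ^ 2)) = 1

/-!
In an orthonormal basis `f` of eigenvectors of `Γ_cΓ_c*`, suitably normalized, the antilinear map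
`v ↦ Γ_c v̄` is diagonal with entries `D j` of modulus `λ j`; in a basis `g` of eigenvectors of
`Γ̃_cΓ̃_c*` the map `v ↦ Γ̃_c v̄` is diagonal with entries `Q k` of modulus `μ k`. The arguments of
the numbers `D j`, `Q k` are the `2N` angles of the torus.

Since `Γ̃_cΓ̃_c* = Γ_cΓ_c* - ⟪c, ·⟫ c` is a rank one perturbation, the secular equation
`∑ j, |⟪f j, c⟫|² / (λ j² - μ k²) = 1` determines the moduli `a j = |⟪f j, c⟫|`. Normalizing the
phases of `f` so that `⟪f j, c⟫ = a j > 0`, the bases `f` and `g` are related by the orthogonal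
Cauchy matrix `O` with entries proportional to `a j / (λ j² - μ k²)`. As `Γ̃_c` is `Γ_c` followed
by the backward shift, `c` is recovered from its angles by the formula
`c n = (a / D) (K D⁻¹)ⁿ a` with `K = O Q Oᵀ`.

Conversely this formula defines for all angles a symbol with the prescribed singular values. The
matrix `A = K D⁻¹` satisfies `1 - A*A = (a / D)* (a / D)`, and a Vandermonde argument excludes
unimodular eigenvalues of `A`; hence `Aⁿ → 0`, so the rows `(a / D) Aⁿ` have orthonormal columns
in `ℓ²`, which are the vectors `f j`. On the resulting torus the `h^{1/2}` norm is the
Hilbert–Schmidt norm `(∑ j, λ j²)^{1/2}` of `Γ_c`, a constant, so coordinatewise continuity implies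
continuity, and a continuous bijection from a compact space is a homeomorphism.
-/

/-! ### Interlacing sequences and Cauchy matrices -/

/-- The families `x` and `y` interlace decreasingly: `x₁ > y₁ > x₂ > y₂ > ⋯`. -/
structure Interlaced {ι α : Type*} [Preorder ι] [Preorder α] (x y : ι → α) : Prop where
  lt_left : ∀ j, y j < x j
  left_lt_of_lt : ∀ ⦃j k⦄, j < k → x k < y j

namespace Interlaced

theorem of_consecutive {α : Type*} [Preorder α] {N : ℕ} {x y : Fin N → α}
    (hyx : ∀ j, y j < x j) (hxy : ∀ j k : Fin N, (j : ℕ) + 1 = k → x k < y j) :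
    Interlaced x y := by
  have h : ∀ (j : Fin N) (k : ℕ), (j : ℕ) + 1 ≤ k → ∀ hk : k < N, x ⟨k, hk⟩ < y j := by
    intro j k hjk
    induction k, hjk using Nat.le_induction with
    | base => exact fun hk => hxy _ _ rfl
    | succ k _ ih =>
      exact fun hk => (hxy ⟨k, by omega⟩ _ rfl).trans ((hyx _).trans (ih _))
  exact ⟨hyx, fun j k hjk => h j k hjk k.2⟩

section LinearOrder

variable {ι α : Type*} [LinearOrder ι] [Preorder α] {x y : ι → α}

theorem strictAnti_left (h : Interlaced x y) : StrictAnti x :=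
  fun j _ hjk => (h.left_lt_of_lt hjk).trans (h.lt_left j)

theorem strictAnti_right (h : Interlaced x y) : StrictAnti y :=
  fun _ k hjk => (h.lt_left k).trans (h.left_lt_of_lt hjk)

theorem lt_left_of_le (h : Interlaced x y) {j k : ι} (hjk : j ≤ k) : y k < x j :=
  (h.strictAnti_right.antitone hjk).trans_lt (h.lt_left j)

theorem left_ne_right (h : Interlaced x y) (j k : ι) : x j ≠ y k :=
  (le_or_gt j k).elim (fun hjk => (h.lt_left_of_le hjk).ne')
    (fun hkj => (h.left_lt_of_lt hkj).ne)

end LinearOrder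

theorem left_pos {ι α : Type*} [Preorder ι] [Preorder α] [Zero α] {x y : ι → α}
    (h : Interlaced x y) (hy : ∀ j, 0 < y j) (j : ι) : 0 < x j :=
  (hy j).trans (h.lt_left j)

theorem sq_of_pos {ι : Type*} [Preorder ι] {x y : ι → ℝ} (h : Interlaced x y) (hy : ∀ j, 0 < y j) :
    Interlaced (fun j => x j ^ 2) (fun j => y j ^ 2) where
  lt_left j := pow_lt_pow_left₀ (h.lt_left j) (hy j).le two_ne_zero
  left_lt_of_lt _ k hjk :=
    pow_lt_pow_left₀ (h.left_lt_of_lt hjk) (h.left_pos hy k).le two_ne_zero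

end Interlaced

section Cauchy

open Finset

variable {ι : Type*} [Fintype ι] [DecidableEq ι]

/-- The residue at `x j` of the rational function `t ↦ ∏ (t - y i) / ∏ (t - x i)`. -/
def cauchyWeight {F : Type*} [Field F] (x y : ι → F) (j : ι) : F :=
  Lagrange.nodalWeight univ x j * ∏ i, (x j - y i)

/-- Partial fractions: `∏ (t - y i) / ∏ (t - x i) - 1 = ∑ j, cauchyWeight x y j / (t - x j)`,
evaluated at the zero `t = y k` of the left-hand product. -/
theorem sum_cauchyWeight_div_sub {F : Type*} [Field F] {x y : ι → F}
    (hx : Function.Injective x) (k : ι) (hxy : ∀ j, x j ≠ y k) :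
    ∑ j, cauchyWeight x y j / (x j - y k) = 1 := by
  set P := Lagrange.nodal univ x
  set R := Lagrange.nodal univ y - P
  have hdeg : R.degree < #(univ : Finset ι) := by
    simpa only [Lagrange.degree_nodal] using Polynomial.degree_sub_lt_left
      (p := Lagrange.nodal univ y) (q := P) (by simp only [P, Lagrange.degree_nodal])
      Lagrange.nodal_ne_zero
      (Lagrange.nodal_monic.leadingCoeff.trans Lagrange.nodal_monic.leadingCoeff.symm)
  have hR (j : ι) : R.eval (x j) = ∏ i, (x j - y i) := by
    rw [Polynomial.eval_sub, Lagrange.eval_nodal_at_node (mem_univ j), sub_zero,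
      Lagrange.eval_nodal]
  have hRk : R.eval (y k) = -P.eval (y k) := by
    rw [Polynomial.eval_sub, Lagrange.eval_nodal_at_node (mem_univ k), zero_sub]
  have hP : P.eval (y k) ≠ 0 := by
    simpa only [P, Lagrange.eval_nodal, prod_ne_zero_iff, sub_ne_zero] using
      fun i _ => (hxy i).symm
  have hinterp : R.eval (y k) = P.eval (y k) * ∑ j, Lagrange.nodalWeight univ x j *
      (y k - x j)⁻¹ * R.eval (x j) := by
    conv_lhs => rw [Lagrange.eq_interpolate hx.injOn hdeg]
    exact Lagrange.eval_interpolate_not_at_node _ fun i _ => (hxy i).symm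
  have hsum : ∑ j, cauchyWeight x y j / (x j - y k) = -∑ j, Lagrange.nodalWeight univ x j *
      (y k - x j)⁻¹ * R.eval (x j) := by
    rw [← sum_neg_distrib]
    refine sum_congr rfl fun j _ => ?_
    rw [hR, ← neg_sub (x j) (y k), inv_neg, cauchyWeight]
    ring
  rw [hsum, neg_eq_iff_eq_neg]
  exact mul_left_cancel₀ hP (by rw [← hinterp, hRk, mul_neg_one])

variable {x y : ι → ℝ}

theorem Interlaced.cauchyWeight_pos [LinearOrder ι] (h : Interlaced x y) (j : ι) :
    0 < cauchyWeight x y j := by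
  rw [cauchyWeight, Lagrange.nodalWeight, ← mul_prod_erase univ _ (mem_univ j), mul_left_comm,
    ← prod_mul_distrib]
  refine mul_pos (sub_pos.mpr (h.lt_left j)) (prod_pos fun i hi => ?_)
  rcases lt_or_gt_of_ne (ne_of_mem_erase hi) with hij | hji
  · exact mul_pos_of_neg_of_neg (inv_lt_zero.mpr (sub_neg.mpr (h.strictAnti_left hij)))
      (sub_neg.mpr (h.left_lt_of_lt hij))
  · exact mul_pos (inv_pos.mpr (sub_pos.mpr (h.strictAnti_left hji)))
      (sub_pos.mpr (h.lt_left_of_le hji.le))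

/-- The amplitudes `a` of the Cauchy matrix `a j / (x j - y k)`, chosen so that its columns are
orthogonal when `x` and `y` interlace. -/
def cauchyAmplitude (x y : ι → ℝ) (j : ι) : ℝ := √(cauchyWeight x y j)

/-- The squared length of the `k`-th column of the Cauchy matrix of `x` and `y`. -/
def cauchyColumnSq (x y : ι → ℝ) (k : ι) : ℝ := ∑ j, (cauchyAmplitude x y j / (x j - y k)) ^ 2

/-- The Cauchy matrix of `x` and `y` with columns scaled to unit length. -/
def cauchyOrthogonal (x y : ι → ℝ) : Matrix ι ι ℝ :=
  .of fun j k => cauchyAmplitude x y j / (x j - y k) / √(cauchyColumnSq x y k)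

theorem cauchyOrthogonal_apply (x y : ι → ℝ) (j k : ι) :
    cauchyOrthogonal x y j k =
      cauchyAmplitude x y j / (x j - y k) / √(cauchyColumnSq x y k) :=
  rfl

namespace Interlaced

variable [LinearOrder ι]

theorem cauchyAmplitude_pos (h : Interlaced x y) (j : ι) : 0 < cauchyAmplitude x y j :=
  Real.sqrt_pos.mpr (h.cauchyWeight_pos j)

theorem sum_cauchyAmplitude_sq_div (h : Interlaced x y) (k : ι) :
    ∑ j, cauchyAmplitude x y j ^ 2 / (x j - y k) = 1 := by
  simpa only [cauchyAmplitude, Real.sq_sqrt (h.cauchyWeight_pos _).le] using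
    sum_cauchyWeight_div_sub h.strictAnti_left.injective k (h.left_ne_right · k)

theorem cauchyColumnSq_pos (h : Interlaced x y) (k : ι) : 0 < cauchyColumnSq x y k :=
  sum_pos (fun j _ => sq_pos_of_ne_zero
    (div_ne_zero (h.cauchyAmplitude_pos j).ne' (sub_ne_zero.mpr (h.left_ne_right j k))))
    ⟨k, mem_univ k⟩

theorem sum_cauchy_columns_eq_zero (h : Interlaced x y) {k l : ι} (hkl : k ≠ l) :
    ∑ j, cauchyAmplitude x y j / (x j - y k) * (cauchyAmplitude x y j / (x j - y l)) = 0 := by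
  have hyne : y k - y l ≠ 0 := sub_ne_zero.mpr (h.strictAnti_right.injective.ne hkl)
  have hterm (j : ι) :
      cauchyAmplitude x y j / (x j - y k) * (cauchyAmplitude x y j / (x j - y l)) =
        (y k - y l)⁻¹ * (cauchyAmplitude x y j ^ 2 / (x j - y k) -
          cauchyAmplitude x y j ^ 2 / (x j - y l)) := by
    have := sub_ne_zero.mpr (h.left_ne_right j k)
    have := sub_ne_zero.mpr (h.left_ne_right j l)
    field_simp
    ring
  simp only [hterm, ← mul_sum, sum_sub_distrib, h.sum_cauchyAmplitude_sq_div, sub_self, mul_zero]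

open Matrix in
theorem cauchyOrthogonal_transpose_mul_self (h : Interlaced x y) :
    (cauchyOrthogonal x y)ᵀ * cauchyOrthogonal x y = 1 := by
  ext k l
  have hentry : ((cauchyOrthogonal x y)ᵀ * cauchyOrthogonal x y) k l =
      (∑ j, cauchyAmplitude x y j / (x j - y k) * (cauchyAmplitude x y j / (x j - y l))) /
        (√(cauchyColumnSq x y k) * √(cauchyColumnSq x y l)) := by
    simp only [mul_apply, transpose_apply, cauchyOrthogonal_apply, sum_div, div_mul_div_comm]
  rw [hentry]
  rcases eq_or_ne k l with rfl | hkl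
  · rw [Real.mul_self_sqrt (h.cauchyColumnSq_pos k).le, one_apply_eq]
    simp only [← sq]
    exact div_self (h.cauchyColumnSq_pos k).ne'
  · rw [h.sum_cauchy_columns_eq_zero hkl, zero_div, one_apply_ne hkl]

open Matrix in
theorem cauchyOrthogonal_mul_transpose_self (h : Interlaced x y) :
    cauchyOrthogonal x y * (cauchyOrthogonal x y)ᵀ = 1 :=
  mul_eq_one_comm.mp h.cauchyOrthogonal_transpose_mul_self

open Matrix in
theorem cauchyAmplitude_vecMul_cauchyOrthogonal (h : Interlaced x y) (k : ι) :
    (cauchyAmplitude x y ᵥ* cauchyOrthogonal x y) k = (√(cauchyColumnSq x y k))⁻¹ := by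
  simp only [vecMul, dotProduct, cauchyOrthogonal_apply, ← mul_div_assoc, ← sq, ← sum_div,
    h.sum_cauchyAmplitude_sq_div, one_div]

open Matrix in
/-- The `y k` are the eigenvalues, and the columns of the orthogonal Cauchy matrix the
eigenvectors, of a rank-one perturbation of `diagonal x`. -/
theorem diagonal_sub_vecMulVec_mul_cauchyOrthogonal (h : Interlaced x y) :
    (diagonal x - vecMulVec (cauchyAmplitude x y) (cauchyAmplitude x y)) * cauchyOrthogonal x y =
      cauchyOrthogonal x y * diagonal y := by
  ext j k
  rw [mul_diagonal, Matrix.sub_mul, Matrix.sub_apply, diagonal_mul, vecMulVec_mul,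
    vecMulVec_apply, h.cauchyAmplitude_vecMul_cauchyOrthogonal, cauchyOrthogonal_apply]
  have := sub_ne_zero.mpr (h.left_ne_right j k)
  have := (Real.sqrt_pos.mpr (h.cauchyColumnSq_pos k)).ne'
  field_simp
  ring

open Matrix in
theorem cauchyOrthogonal_conj_diagonal (h : Interlaced x y) :
    cauchyOrthogonal x y * diagonal y * (cauchyOrthogonal x y)ᵀ =
      diagonal x - vecMulVec (cauchyAmplitude x y) (cauchyAmplitude x y) := by
  rw [← h.diagonal_sub_vecMulVec_mul_cauchyOrthogonal, Matrix.mul_assoc,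
    h.cauchyOrthogonal_mul_transpose_self, Matrix.mul_one]

open Matrix in
theorem eq_cauchyAmplitude_of_sum_sq_div (h : Interlaced x y) {b : ι → ℝ} (hb₀ : ∀ j, 0 ≤ b j)
    (hb : ∀ k, ∑ j, b j ^ 2 / (x j - y k) = 1) : b = cauchyAmplitude x y := by
  set a := cauchyAmplitude x y
  have hv : (fun j => (b j ^ 2 - a j ^ 2) / a j) ᵥ* cauchyOrthogonal x y = 0 := by
    ext k
    have hsum : ∑ j, (b j ^ 2 - a j ^ 2) / (x j - y k) = 0 := by
      simp only [sub_div, sum_sub_distrib, hb, h.sum_cauchyAmplitude_sq_div, a, sub_self]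
    have hterm (j : ι) : (b j ^ 2 - a j ^ 2) / a j * cauchyOrthogonal x y j k =
        (b j ^ 2 - a j ^ 2) / (x j - y k) / √(cauchyColumnSq x y k) := by
      rw [cauchyOrthogonal_apply, ← mul_div_assoc,
        div_mul_div_cancel₀ (h.cauchyAmplitude_pos j).ne']
    simp only [vecMul, dotProduct, hterm, ← sum_div, hsum, zero_div, Pi.zero_apply]
  have hv₀ : (fun j => (b j ^ 2 - a j ^ 2) / a j) = 0 := by
    simpa only [vecMul_vecMul, h.cauchyOrthogonal_mul_transpose_self, vecMul_one, zero_vecMul]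
      using congrArg (· ᵥ* (cauchyOrthogonal x y)ᵀ) hv
  ext j
  have ha := h.cauchyAmplitude_pos j
  have hsq : b j ^ 2 - a j ^ 2 = 0 := (div_eq_zero_iff.mp (congrFun hv₀ j)).resolve_right ha.ne'
  exact (pow_left_inj₀ (hb₀ j) ha.le two_ne_zero).mp (sub_eq_zero.mp hsq)

end Interlaced

end Cauchy

/-! ### Powers of matrices with eigenvalues in the unit disc -/

open Filter Topology in
theorem tendsto_pow_zero_of_spectralRadius_lt_one {A : Type*} [NormedRing A] [NormedAlgebra ℂ A]
    [CompleteSpace A] {a : A} (ha : spectralRadius ℂ a < 1) :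
    Tendsto (fun n : ℕ => a ^ n) atTop (𝓝 0) := by
  obtain ⟨r, har, hr⟩ := ENNReal.lt_iff_exists_nnreal_btwn.mp ha
  rw [← ENNReal.coe_one, ENNReal.coe_lt_coe] at hr
  refine squeeze_zero_norm' ?_ (tendsto_pow_atTop_nhds_zero_of_lt_one r.2 hr)
  filter_upwards [(spectrum.gelfand_formula a).eventually_lt_const har, eventually_gt_atTop 0]
    with n hn hpos
  rw [one_div, ENNReal.rpow_inv_lt_iff (Nat.cast_pos.mpr hpos), ENNReal.rpow_natCast] at hn
  exact_mod_cast hn.le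

open Filter Topology in
open scoped Matrix.Norms.Operator in
theorem tendsto_matrix_pow_zero {ι : Type*} [Fintype ι] [DecidableEq ι] {A : Matrix ι ι ℂ}
    (hA : ∀ w : ℂ, ∀ z ≠ 0, A.mulVec z = w • z → ‖w‖ < 1) :
    Tendsto (fun n : ℕ => A ^ n) atTop (𝓝 0) := by
  cases isEmpty_or_nonempty ι
  · exact tendsto_const_nhds.congr fun n => Subsingleton.elim _ _
  refine tendsto_pow_zero_of_spectralRadius_lt_one ?_
  refine spectrum.spectralRadius_lt_of_forall_lt A fun w hw => ?_
  rw [← Matrix.spectrum_toLin', ← Module.End.hasEigenvalue_iff_mem_spectrum] at hw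
  obtain ⟨z, hz⟩ := hw.exists_hasEigenvector
  exact hA w z hz.2 (by simpa only [Matrix.toLin'_apply] using hz.apply_eq_smul)

/-! ### Balanced realizations -/

theorem eq_zero_of_forall_sum_mul_pow_eq_zero {ι R : Type*} [Fintype ι] [CommRing R] [IsDomain R]
    {f v : ι → R} (hf : Function.Injective f) (hfv : ∀ m : ℕ, ∑ j, v j * f j ^ m = 0) : v = 0 := by
  let e := (Fintype.equivFin ι).symm
  have hcomp : v ∘ e = 0 := Matrix.eq_zero_of_forall_pow_sum_mul_pow_eq_zero
    (hf.comp e.injective) fun m => (e.sum_comp fun j => v j * f j ^ (m : ℕ)).trans (hfv m)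
  exact funext (e.surjective.forall.mpr (congrFun hcomp))

theorem injective_ofReal_sq {ι : Type*} {x : ι → ℝ} (hx : ∀ j, 0 ≤ x j)
    (hinj : Function.Injective x) : Function.Injective fun j => (x j : ℂ) ^ 2 := fun i j hij =>
  hinj ((pow_left_inj₀ (hx i) (hx j) two_ne_zero).mp
    (Complex.ofReal_injective (by simpa only [Complex.ofReal_pow] using hij)))

section Realization

open Matrix Filter Topology

variable {ι : Type*} [Fintype ι] [DecidableEq ι]

/-- The state matrix `A = K D⁻¹` of the realization `(D, K, a)` of a Hankel matrix. Here `D` and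
`K` are the matrices of the Hankel operator and of its shift in a common Takagi basis, and `a` is
the coordinate vector of the symbol. -/
def stateMatrix (D : ι → ℂ) (K : Matrix ι ι ℂ) : Matrix ι ι ℂ :=
  K * diagonal D⁻¹

/-- The `n`-th row `r₀ Aⁿ`, `r₀ = a / D`, of the observability matrix of the realization
`(D, K, a)`. Its `j`-th entry is the `n`-th coordinate of the `j`-th Takagi vector. -/
def observabilityRow (D : ι → ℂ) (K : Matrix ι ι ℂ) (a : ι → ℂ) (n : ℕ) : ι → ℂ :=
  (a / D) ᵥ* stateMatrix D K ^ n

/-- The sequence `n ↦ r₀ Aⁿ a` realized by `(D, K, a)`. -/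
def realizedSeq (D : ι → ℂ) (K : Matrix ι ι ℂ) (a : ι → ℂ) (n : ℕ) : ℂ :=
  observabilityRow D K a n ⬝ᵥ a

variable {D : ι → ℂ} {K : Matrix ι ι ℂ} {a : ι → ℂ}

theorem observabilityRow_zero (D : ι → ℂ) (K : Matrix ι ι ℂ) (a : ι → ℂ) :
    observabilityRow D K a 0 = a / D := by
  rw [observabilityRow, pow_zero, vecMul_one]

theorem observabilityRow_succ (D : ι → ℂ) (K : Matrix ι ι ℂ) (a : ι → ℂ) (n : ℕ) :
    observabilityRow D K a (n + 1) = observabilityRow D K a n ᵥ* stateMatrix D K := by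
  rw [observabilityRow, observabilityRow, vecMul_vecMul, ← pow_succ]

theorem stateMatrix_mul_diagonal (hD : ∀ j, D j ≠ 0) (K : Matrix ι ι ℂ) :
    stateMatrix D K * diagonal D = K := by
  have hinv : (fun j => D⁻¹ j * D j) = fun _ => 1 := funext fun j => inv_mul_cancel₀ (hD j)
  rw [stateMatrix, Matrix.mul_assoc, diagonal_mul_diagonal, hinv, diagonal_one, Matrix.mul_one]

theorem diagonal_mul_stateMatrix_transpose (hD : ∀ j, D j ≠ 0) (hK : Kᵀ = K) :
    diagonal D * (stateMatrix D K)ᵀ = K := by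
  rw [← diagonal_transpose, ← transpose_mul, stateMatrix_mul_diagonal hD, hK]

theorem observabilityRow_dotProduct_diagonal_mulVec (hD : ∀ j, D j ≠ 0) (hK : Kᵀ = K) (n p : ℕ) :
    observabilityRow D K a n ⬝ᵥ (diagonal D *ᵥ observabilityRow D K a p) =
      realizedSeq D K a (n + p) := by
  have hsemi : SemiconjBy (diagonal D) (stateMatrix D K)ᵀ (stateMatrix D K) :=
    (diagonal_mul_stateMatrix_transpose hD hK).trans (stateMatrix_mul_diagonal hD K).symm
  have hr₀ : diagonal D *ᵥ (a / D) = a :=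
    funext fun j => (mulVec_diagonal _ _ j).trans (mul_div_cancel₀ _ (hD j))
  have hcol : diagonal D *ᵥ observabilityRow D K a p = stateMatrix D K ^ p *ᵥ a := by
    rw [observabilityRow, ← mulVec_transpose, mulVec_mulVec, transpose_pow,
      (hsemi.pow_right p).eq, ← mulVec_mulVec, hr₀]
  rw [hcol, dotProduct_mulVec, realizedSeq, observabilityRow, vecMul_vecMul, ← pow_add,
    observabilityRow]

theorem observabilityRow_dotProduct_mulVec (hD : ∀ j, D j ≠ 0) (hK : Kᵀ = K) (n p : ℕ) :
    observabilityRow D K a n ⬝ᵥ (K *ᵥ observabilityRow D K a p) =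
      realizedSeq D K a (n + p + 1) := by
  have hfactor (v : ι → ℂ) : K *ᵥ v = stateMatrix D K *ᵥ (diagonal D *ᵥ v) := by
    rw [mulVec_mulVec, stateMatrix_mul_diagonal hD]
  rw [hfactor, dotProduct_mulVec, ← observabilityRow_succ,
    observabilityRow_dotProduct_diagonal_mulVec hD hK, add_right_comm]

/-- The realization `(D, K, a)` is *balanced*: `K` is symmetric and `K*K = |D|² - a*a`, which is
the relation `Γ̃*Γ̃ = Γ*Γ - ⟪·, c⟫ c` between a Hankel operator and its shift read in a Takagi
basis. -/
structure IsBalanced (D : ι → ℂ) (K : Matrix ι ι ℂ) (a : ι → ℂ) : Prop where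
  ne_zero : ∀ j, D j ≠ 0
  transpose_eq : Kᵀ = K
  conjTranspose_mul_self :
    Kᴴ * K = diagonal (fun j => star (D j) * D j) - vecMulVec (star a) a

namespace IsBalanced

theorem conjTranspose_stateMatrix_mul_self (h : IsBalanced D K a) :
    (stateMatrix D K)ᴴ * stateMatrix D K = 1 - vecMulVec (star (a / D)) (a / D) := by
  have hconj : (stateMatrix D K)ᴴ * stateMatrix D K =
      diagonal (star D⁻¹) * (Kᴴ * K) * diagonal D⁻¹ := by
    simp only [stateMatrix, conjTranspose_mul, diagonal_conjTranspose, Matrix.mul_assoc]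
  rw [hconj, h.conjTranspose_mul_self]
  ext i j
  have hi := h.ne_zero i
  have hi' : star (D i) ≠ 0 := star_ne_zero.mpr hi
  simp only [mul_diagonal, diagonal_mul, Matrix.sub_apply, vecMulVec_apply, Pi.star_apply,
    Pi.inv_apply, Pi.div_apply, star_div₀, star_inv₀]
  rcases eq_or_ne i j with rfl | hij
  · rw [diagonal_apply_eq, one_apply_eq]
    field_simp
  · rw [diagonal_apply_ne _ hij, one_apply_ne hij]
    ring

theorem sum_range_vecMulVec_observabilityRow (h : IsBalanced D K a) (n : ℕ) :
    ∑ m ∈ Finset.range n,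
        vecMulVec (star (observabilityRow D K a m)) (observabilityRow D K a m) =
      1 - (stateMatrix D K ^ n)ᴴ * stateMatrix D K ^ n := by
  induction n with
  | zero => simp only [Finset.range_zero, Finset.sum_empty, pow_zero, conjTranspose_one,
      Matrix.mul_one, sub_self]
  | succ n ih =>
    have hrow : vecMulVec (star (observabilityRow D K a n)) (observabilityRow D K a n) =
        (stateMatrix D K ^ n)ᴴ * (1 - (stateMatrix D K)ᴴ * stateMatrix D K) *
          stateMatrix D K ^ n := by
      rw [h.conjTranspose_stateMatrix_mul_self, sub_sub_cancel, mul_vecMulVec, vecMulVec_mul,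
        observabilityRow, star_vecMul]
    rw [Finset.sum_range_succ, ih, hrow, pow_succ', conjTranspose_mul]
    simp only [Matrix.mul_sub, Matrix.sub_mul, Matrix.mul_one, Matrix.mul_assoc, sub_add_sub_cancel]

theorem one_sub_norm_sq_mul_sum_norm_sq (h : IsBalanced D K a) {w : ℂ} {z : ι → ℂ}
    (hz : stateMatrix D K *ᵥ z = w • z) :
    (1 - ‖w‖ ^ 2) * ∑ j, ‖z j‖ ^ 2 = ‖(a / D) ⬝ᵥ z‖ ^ 2 := by
  have hself (v : ι → ℂ) : star v ⬝ᵥ v = ((∑ j, ‖v j‖ ^ 2 : ℝ) : ℂ) := by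
    simp only [dotProduct, Pi.star_apply, RCLike.star_def, Complex.conj_mul', Complex.ofReal_sum,
      Complex.ofReal_pow]
  have hnorm : star (w • z) ⬝ᵥ (w • z) =
      star z ⬝ᵥ z - star ((a / D) ⬝ᵥ z) * ((a / D) ⬝ᵥ z) := by
    rw [← hz, star_mulVec, ← dotProduct_mulVec, mulVec_mulVec,
      h.conjTranspose_stateMatrix_mul_self, sub_mulVec, one_mulVec, dotProduct_sub,
      vecMulVec_mulVec, op_smul_eq_smul, dotProduct_smul, star_dotProduct_star, smul_eq_mul,
      mul_comm]
  rw [star_smul, smul_dotProduct, dotProduct_smul, hself, smul_eq_mul, smul_eq_mul, ← mul_assoc,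
    RCLike.star_def, Complex.conj_mul', Complex.conj_mul'] at hnorm
  have hreal : ‖w‖ ^ 2 * ∑ j, ‖z j‖ ^ 2 = ∑ j, ‖z j‖ ^ 2 - ‖(a / D) ⬝ᵥ z‖ ^ 2 := by
    exact_mod_cast hnorm
  linear_combination -hreal

theorem div_dotProduct_eq_zero (h : IsBalanced D K a) {w : ℂ} (hw : ‖w‖ = 1) {z : ι → ℂ}
    (hz : stateMatrix D K *ᵥ z = w • z) : (a / D) ⬝ᵥ z = 0 := by
  have hnorm := h.one_sub_norm_sq_mul_sum_norm_sq hz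
  rw [hw, one_pow, sub_self, zero_mul] at hnorm
  exact norm_eq_zero.mp (pow_eq_zero_iff two_ne_zero |>.mp hnorm.symm)

/-- Unimodular eigenvectors of the state matrix are stable under the antilinear operator
`z ↦ D z̄`, which intertwines it with its adjoint. -/
theorem stateMatrix_mulVec_mul_star (h : IsBalanced D K a) {w : ℂ} (hw : ‖w‖ = 1) {z : ι → ℂ}
    (hz : stateMatrix D K *ᵥ z = w • z) :
    stateMatrix D K *ᵥ (D * star z) = w • (D * star z) := by
  have hww : w * star w = 1 := by
    rw [RCLike.star_def, Complex.mul_conj', hw, Complex.ofReal_one, one_pow]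
  have hadj : (stateMatrix D K)ᴴ *ᵥ (w • z) = z := by
    rw [← hz, mulVec_mulVec, h.conjTranspose_stateMatrix_mul_self, sub_mulVec, one_mulVec,
      vecMulVec_mulVec, h.div_dotProduct_eq_zero hw hz, MulOpposite.op_zero, zero_smul, sub_zero]
  have hstar : star w • ((stateMatrix D K)ᵀ *ᵥ star z) = star z := by
    simpa only [star_mulVec, conjTranspose_conjTranspose, star_smul, ← mulVec_transpose,
      mulVec_smul] using congrArg star hadj
  have htrans : (stateMatrix D K)ᵀ *ᵥ star z = w • star z := by
    rw [← one_smul ℂ ((stateMatrix D K)ᵀ *ᵥ star z), ← hww, mul_smul, hstar]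
  have hdiag (v : ι → ℂ) : D * v = diagonal D *ᵥ v := funext fun j => (mulVec_diagonal D v j).symm
  rw [hdiag, mulVec_mulVec, stateMatrix_mul_diagonal h.ne_zero,
    ← diagonal_mul_stateMatrix_transpose h.ne_zero h.transpose_eq, ← mulVec_mulVec, htrans,
    mulVec_smul]

theorem stateMatrix_mulVec_pow_mul (h : IsBalanced D K a) {w : ℂ} (hw : ‖w‖ = 1) {z : ι → ℂ}
    (hz : stateMatrix D K *ᵥ z = w • z) (m : ℕ) :
    stateMatrix D K *ᵥ ((D * star D) ^ m * z) = w • ((D * star D) ^ m * z) := by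
  induction m with
  | zero => simpa only [pow_zero, one_mul] using hz
  | succ m ih =>
    have hsq : (D * star D) ^ (m + 1) * z = D * star (D * star ((D * star D) ^ m * z)) := by
      rw [star_mul', star_star, pow_succ']
      ring
    rw [hsq]
    exact h.stateMatrix_mulVec_mul_star hw (h.stateMatrix_mulVec_mul_star hw ih)

/-- The diagonal matrix `|D|²` acts on unimodular eigenvectors `z`, all of which are orthogonal
to `a / D`; a Vandermonde argument then kills every coordinate of `z`. -/
theorem eq_zero_of_unimodular (h : IsBalanced D K a) (hinj : Function.Injective fun j => ‖D j‖)
    (ha : ∀ j, a j ≠ 0) {w : ℂ} (hw : ‖w‖ = 1) {z : ι → ℂ}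
    (hz : stateMatrix D K *ᵥ z = w • z) : z = 0 := by
  have hnormSq : D * star D = fun j => (‖D j‖ : ℂ) ^ 2 := funext fun j => Complex.mul_conj' (D j)
  have hsq : Function.Injective (D * star D) :=
    hnormSq ▸ injective_ofReal_sq (fun j => norm_nonneg (D j)) hinj
  have hvand : (a / D) * z = 0 := by
    refine eq_zero_of_forall_sum_mul_pow_eq_zero hsq fun m => ?_
    rw [← h.div_dotProduct_eq_zero hw (h.stateMatrix_mulVec_pow_mul hw hz m)]
    exact Finset.sum_congr rfl fun j _ => by
      simp only [Pi.mul_apply, Pi.pow_apply]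
      ring
  ext j
  exact (mul_eq_zero.mp (congrFun hvand j)).resolve_left (div_ne_zero (ha j) (h.ne_zero j))

theorem norm_lt_one_of_mulVec_eq_smul (h : IsBalanced D K a)
    (hinj : Function.Injective fun j => ‖D j‖) (ha : ∀ j, a j ≠ 0) {w : ℂ} {z : ι → ℂ}
    (hz₀ : z ≠ 0) (hz : stateMatrix D K *ᵥ z = w • z) : ‖w‖ < 1 := by
  refine lt_of_le_of_ne ?_ fun hw => hz₀ (h.eq_zero_of_unimodular hinj ha hw hz)
  obtain ⟨j, hj⟩ := Function.ne_iff.mp hz₀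
  have hpos : 0 < ∑ j, ‖z j‖ ^ 2 := Finset.sum_pos' (fun _ _ => sq_nonneg _)
    ⟨j, Finset.mem_univ j, sq_pos_of_pos (norm_pos_iff.mpr hj)⟩
  have hle : 0 ≤ 1 - ‖w‖ ^ 2 := nonneg_of_mul_nonneg_left
    ((sq_nonneg _).trans_eq (h.one_sub_norm_sq_mul_sum_norm_sq hz).symm) hpos
  exact (sq_le_one_iff₀ (norm_nonneg w)).mp (sub_nonneg.mp hle)

theorem tendsto_stateMatrix_pow (h : IsBalanced D K a)
    (hinj : Function.Injective fun j => ‖D j‖) (ha : ∀ j, a j ≠ 0) :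
    Tendsto (fun n : ℕ => stateMatrix D K ^ n) atTop (𝓝 0) :=
  tendsto_matrix_pow_zero fun _ _ hz₀ hz => h.norm_lt_one_of_mulVec_eq_smul hinj ha hz₀ hz

theorem sum_range_star_mul_observabilityRow (h : IsBalanced D K a) (n : ℕ) (i j : ι) :
    ∑ m ∈ Finset.range n, star (observabilityRow D K a m i) * observabilityRow D K a m j =
      (1 - (stateMatrix D K ^ n)ᴴ * stateMatrix D K ^ n) i j := by
  rw [← h.sum_range_vecMulVec_observabilityRow, Matrix.sum_apply]
  rfl

theorem tendsto_sum_star_mul_observabilityRow (h : IsBalanced D K a)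
    (hinj : Function.Injective fun j => ‖D j‖) (ha : ∀ j, a j ≠ 0) (i j : ι) :
    Tendsto (fun n => ∑ m ∈ Finset.range n,
        star (observabilityRow D K a m i) * observabilityRow D K a m j)
      atTop (𝓝 ((1 : Matrix ι ι ℂ) i j)) := by
  have hcont : Continuous fun M : Matrix ι ι ℂ => (1 - Mᴴ * M) i j :=
    (continuous_const.sub (continuous_id.matrix_conjTranspose.mul continuous_id)).matrix_elem i j
  have hlim := (hcont.tendsto 0).comp (h.tendsto_stateMatrix_pow hinj ha)
  rw [Matrix.mul_zero, sub_zero] at hlim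
  exact hlim.congr fun n => (h.sum_range_star_mul_observabilityRow n i j).symm

end IsBalanced

end Realization

/-! ### Spectral and Takagi sums -/

section SpectralSum

open Module.End

variable {𝕜 E ι : Type*} [RCLike 𝕜] [NormedAddCommGroup E] [InnerProductSpace 𝕜 E] [Fintype ι]
  {f : ι → E} {z : ι → 𝕜} {T : E →ₗ[𝕜] E}

theorem mem_eigenspace_spectralSum (hf : Orthonormal 𝕜 f)
    (hT : ∀ x, T x = ∑ j, (z j * ⟪f j, x⟫_𝕜) • f j) (j : ι) : f j ∈ eigenspace T (z j) := by
  classical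
  rw [mem_eigenspace_iff, hT]
  simp only [orthonormal_iff_ite.mp hf, mul_ite, mul_one, mul_zero, ite_smul, zero_smul,
    Finset.sum_ite_eq', Finset.mem_univ, if_true]

theorem inner_eq_zero_of_mem_eigenspace_spectralSum (hf : Orthonormal 𝕜 f)
    (hT : ∀ x, T x = ∑ j, (z j * ⟪f j, x⟫_𝕜) • f j) {w : 𝕜} {v : E} (hv : v ∈ eigenspace T w)
    {j : ι} (hj : z j ≠ w) : ⟪f j, v⟫_𝕜 = 0 := by
  have h := hf.inner_right_fintype (fun i => z i * ⟪f i, v⟫_𝕜) j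
  rw [← hT, mem_eigenspace_iff.mp hv, inner_smul_right] at h
  by_contra hne
  exact hj (mul_right_cancel₀ hne h).symm

theorem nonzero_eigenvalues_spectralSum (hf : Orthonormal 𝕜 f)
    (hT : ∀ x, T x = ∑ j, (z j * ⟪f j, x⟫_𝕜) • f j) (hz : ∀ j, z j ≠ 0) :
    {w : 𝕜 | w ≠ 0 ∧ HasEigenvalue T w} = Set.range z := by
  refine Set.Subset.antisymm ?_ (Set.range_subset_iff.mpr fun j => ⟨hz j,
    hasEigenvalue_of_hasEigenvector ⟨mem_eigenspace_spectralSum hf hT j, hf.ne_zero j⟩⟩)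
  rintro w ⟨hw₀, hw⟩
  obtain ⟨v, hv, hv₀⟩ := hw.exists_hasEigenvector
  by_contra hrange
  have hwv : w • v = 0 := by
    rw [← mem_eigenspace_iff.mp hv, hT]
    refine Finset.sum_eq_zero fun j _ => ?_
    rw [inner_eq_zero_of_mem_eigenspace_spectralSum hf hT hv fun h => hrange ⟨j, h⟩, mul_zero,
      zero_smul]
  exact hv₀ ((smul_eq_zero.mp hwv).resolve_left hw₀)

theorem eigenspace_spectralSum (hf : Orthonormal 𝕜 f)
    (hT : ∀ x, T x = ∑ j, (z j * ⟪f j, x⟫_𝕜) • f j) (hinj : Function.Injective z) {j : ι}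
    (hz : z j ≠ 0) :
    eigenspace T (z j) = Submodule.span 𝕜 {f j} := by
  refine le_antisymm (fun v hv => ?_)
    ((Submodule.span_singleton_le_iff_mem _ _).mpr (mem_eigenspace_spectralSum hf hT j))
  have hzv : z j • v = z j • (⟪f j, v⟫_𝕜 • f j) := by
    rw [← mem_eigenspace_iff.mp hv, hT, Finset.sum_eq_single j, smul_smul]
    · intro i _ hij
      rw [inner_eq_zero_of_mem_eigenspace_spectralSum hf hT hv (hinj.ne hij), mul_zero, zero_smul]
    · exact fun h => absurd (Finset.mem_univ j) h
  exact Submodule.mem_span_singleton.mpr ⟨_, (smul_right_injective _ hz hzv).symm⟩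

end SpectralSum

theorem inner_star_star (x y : L2) : ⟪star x, star y⟫_ℂ = ⟪y, x⟫_ℂ := by
  simp only [lp.inner_eq_tsum, lp.star_apply, RCLike.inner_apply, RCLike.star_def,
    RCLike.conj_conj, mul_comm]

theorem orthonormal_star {ι : Type*} {f : ι → L2} (hf : Orthonormal ℂ f) :
    Orthonormal ℂ fun j => star (f j) := by
  classical
  rw [orthonormal_iff_ite] at hf ⊢
  intro i j
  rw [inner_star_star, hf]
  simp only [eq_comm]

section TakagiSum

variable {ι : Type*} [Fintype ι]

/-- The operator `x ↦ ∑ j, s j • ⟪star (f j), x⟫ • f j`, whose matrix `∑ j, s j • f j (f j)ᵀ` is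
symmetric. It realizes the Takagi factorization of Hankel operators of finite rank. -/
def takagiSum (f : ι → L2) (s : ι → ℂ) : L2 →L[ℂ] L2 :=
  ∑ j, s j • InnerProductSpace.rankOne ℂ (f j) (star (f j))

theorem takagiSum_apply (f : ι → L2) (s : ι → ℂ) (x : L2) :
    takagiSum f s x = ∑ j, (s j * ⟪star (f j), x⟫_ℂ) • f j := by
  simp only [takagiSum, sum_apply, smul_apply, InnerProductSpace.rankOne_apply, smul_smul]

variable {f : ι → L2}

theorem takagiSum_star (hf : Orthonormal ℂ f) (s : ι → ℂ) (j : ι) :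
    takagiSum f s (star (f j)) = s j • f j := by
  classical
  simp only [takagiSum_apply, orthonormal_iff_ite.mp (orthonormal_star hf), mul_ite, mul_one,
    mul_zero, ite_smul, zero_smul, Finset.sum_ite_eq', Finset.mem_univ, if_true]

theorem opT_takagiSum_apply (hf : Orthonormal ℂ f) (s : ι → ℂ) (x : L2) :
    opT (takagiSum f s) x = ∑ j, ((‖s j‖ : ℂ) ^ 2 * ⟪f j, x⟫_ℂ) • f j := by
  have hadj : ContinuousLinearMap.adjoint (takagiSum f s) x =
      ∑ j, (star (s j) * ⟪f j, x⟫_ℂ) • star (f j) := by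
    simp only [takagiSum, map_sum, map_smulₛₗ, sum_apply, smul_apply,
      InnerProductSpace.adjoint_rankOne, InnerProductSpace.rankOne_apply, smul_smul,
      RCLike.star_def]
  rw [opT, ContinuousLinearMap.comp_apply, hadj, map_sum]
  refine Finset.sum_congr rfl fun j _ => ?_
  rw [map_smul, takagiSum_star hf, smul_smul, ← Complex.mul_conj', RCLike.star_def]
  ring_nf

theorem range_takagiSum (hf : Orthonormal ℂ f) {s : ι → ℂ} (hs : ∀ j, s j ≠ 0) :
    LinearMap.range (takagiSum f s).toLinearMap = Submodule.span ℂ (Set.range f) := by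
  refine le_antisymm ?_ (Submodule.span_le.mpr (Set.range_subset_iff.mpr fun j =>
    ⟨(s j)⁻¹ • star (f j), ?_⟩))
  · rintro _ ⟨x, rfl⟩
    exact takagiSum_apply f s x ▸ Submodule.sum_mem _ fun j _ =>
      Submodule.smul_mem _ _ (Submodule.subset_span ⟨j, rfl⟩)
  · rw [map_smul, ContinuousLinearMap.coe_coe, takagiSum_star hf, inv_smul_smul₀ (hs j)]

end TakagiSum

theorem hasSimpleSVals_takagiSum {N : ℕ} {f : Fin N → L2} (hf : Orthonormal ℂ f)
    {s : Fin N → ℂ} {lam : Fin N → ℝ} (hs : ∀ j, ‖s j‖ = lam j) (hpos : ∀ j, 0 < lam j)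
    (hinj : Function.Injective lam) : HasSimpleSVals (takagiSum f s) N lam := by
  have hT (x : L2) : (opT (takagiSum f s)).toLinearMap x =
      ∑ j, ((lam j : ℂ) ^ 2 * ⟪f j, x⟫_ℂ) • f j := by
    simp only [ContinuousLinearMap.coe_coe, opT_takagiSum_apply hf, hs]
  have hne (j : Fin N) : (lam j : ℂ) ^ 2 ≠ 0 :=
    pow_ne_zero 2 (Complex.ofReal_ne_zero.mpr (hpos j).ne')
  refine ⟨?_, nonzero_eigenvalues_spectralSum hf hT hne, fun j => ?_⟩
  · rw [LinearMap.rank, range_takagiSum hf fun j => norm_pos_iff.mp ((hpos j).trans_eq (hs j).symm),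
      rank_span hf.linearIndependent, Cardinal.mk_range_eq _ hf.linearIndependent.injective,
      Cardinal.mk_fin]
  · rw [eigenspace_spectralSum hf hT (injective_ofReal_sq (fun i => (hpos i).le) hinj) (hne j),
      finrank_span_singleton (hf.ne_zero j)]

/-! ### Hankel operators -/

namespace IsHankelOp

variable {c : ℕ → ℂ} {Γ Γ' Γt : L2 →L[ℂ] L2}

theorem apply_single (h : IsHankelOp c Γ) (n p : ℕ) :
    (Γ (lp.single 2 p 1) : ℕ → ℂ) n = c (n + p) := by
  rw [h, tsum_eq_single p fun q hq => by rw [lp.single_apply_ne _ _ _ hq, mul_zero],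
    lp.single_apply_self, mul_one]

theorem apply_e0 (h : IsHankelOp c Γ) (n : ℕ) : (Γ e0 : ℕ → ℂ) n = c n :=
  h.apply_single n 0

theorem summable_mul (h : IsHankelOp c Γ) (n : ℕ) (x : L2) :
    Summable fun p => c (n + p) * (x : ℕ → ℂ) p := by
  refine (lp.summable_inner (𝕜 := ℂ) (star (Γ (lp.single 2 n 1))) x).congr fun p => ?_
  rw [lp.star_apply, h.apply_single, RCLike.inner_apply, RCLike.star_def, RCLike.conj_conj,
    mul_comm, add_comm]

theorem eq (h : IsHankelOp c Γ) (h' : IsHankelOp c Γ') : Γ = Γ' :=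
  ContinuousLinearMap.ext fun x => lp.ext (funext fun n => (h x n).trans (h' x n).symm)

theorem adjoint_apply (h : IsHankelOp c Γ) (y : L2) :
    ContinuousLinearMap.adjoint Γ y = star (Γ (star y)) := by
  refine lp.ext (funext fun p => ?_)
  have hcoord : ⟪lp.single 2 p (1 : ℂ), ContinuousLinearMap.adjoint Γ y⟫_ℂ =
      (ContinuousLinearMap.adjoint Γ y : ℕ → ℂ) p := by
    rw [lp.inner_single_left, RCLike.inner_apply, map_one, mul_one]
  rw [← hcoord, ContinuousLinearMap.adjoint_inner_right, lp.inner_eq_tsum, lp.star_apply, h,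
    ← starRingEnd_apply, Complex.conj_tsum]
  refine tsum_congr fun n => ?_
  rw [h.apply_single, RCLike.inner_apply, map_mul, lp.star_apply, RCLike.star_def,
    RCLike.conj_conj, mul_comm, add_comm]

theorem opT_apply (h : IsHankelOp c Γ) (y : L2) : opT Γ y = Γ (star (Γ (star y))) := by
  rw [opT, ContinuousLinearMap.comp_apply, h.adjoint_apply]

theorem shift_apply (h : IsHankelOp c Γ) (ht : IsHankelOp (shiftSeq c) Γt) (x : L2) (n : ℕ) :
    (Γt x : ℕ → ℂ) n = (Γ x : ℕ → ℂ) (n + 1) := by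
  rw [h, ht]
  exact tsum_congr fun p => by rw [shiftSeq, add_right_comm]

theorem apply_star_zero (h : IsHankelOp c Γ) (y : L2) :
    (Γ (star y) : ℕ → ℂ) 0 = ⟪y, Γ e0⟫_ℂ := by
  rw [h, lp.inner_eq_tsum]
  exact tsum_congr fun p => by
    rw [zero_add, h.apply_e0, lp.star_apply, RCLike.inner_apply, RCLike.star_def]

/-- The zeroth term of the series for `Γ (star (Γ (star y)))` is the rank one correction; the
remaining terms form the series for the shifted operator. -/
theorem opT_shift_apply (h : IsHankelOp c Γ) (ht : IsHankelOp (shiftSeq c) Γt) (y : L2) :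
    opT Γt y = opT Γ y - ⟪Γ e0, y⟫_ℂ • Γ e0 := by
  rw [eq_sub_iff_add_eq']
  refine lp.ext (funext fun n => ?_)
  have htail (p : ℕ) : shiftSeq c (n + p) * (star (Γt (star y)) : L2) p =
      c (n + (p + 1)) * (star (Γ (star y)) : L2) (p + 1) := by
    rw [lp.star_apply, lp.star_apply, h.shift_apply ht, shiftSeq, add_assoc]
  rw [h.opT_apply, ht.opT_apply, lp.coeFn_add, Pi.add_apply, lp.coeFn_smul, Pi.smul_apply,
    ht _ n, h (star (Γ (star y))) n, (h.summable_mul n _).tsum_eq_zero_add, tsum_congr htail,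
    h.apply_e0, add_zero, lp.star_apply, h.apply_star_zero, RCLike.star_def, inner_conj_symm,
    smul_eq_mul, mul_comm]

end IsHankelOp

theorem coeFn_sum_smul_apply {ι : Type*} (t : Finset ι) (w : ι → ℂ) (f : ι → L2) (n : ℕ) :
    (∑ j ∈ t, w j • f j : L2) n = ∑ j ∈ t, w j * f j n := by
  simp only [lp.coeFn_sum, Finset.sum_apply, lp.coeFn_smul, Pi.smul_apply, smul_eq_mul]

theorem isHankelOp_takagiSum {ι : Type*} [Fintype ι] {f : ι → L2} {s : ι → ℂ} {c : ℕ → ℂ}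
    (hc : ∀ n p, ∑ j, s j * f j n * f j p = c (n + p)) : IsHankelOp c (takagiSum f s) := by
  intro x n
  have hinner (j : ι) : HasSum (fun p => f j p * x p) ⟪star (f j), x⟫_ℂ := by
    refine (lp.hasSum_inner (𝕜 := ℂ) (star (f j)) x).congr_fun fun p => ?_
    rw [lp.star_apply, RCLike.inner_apply, RCLike.star_def, RCLike.conj_conj, mul_comm]
  have hsum := hasSum_sum fun j (_ : j ∈ Finset.univ) => (hinner j).mul_left (s j * f j n)
  simp only [← mul_assoc, ← Finset.sum_mul, hc] at hsum
  rw [hsum.tsum_eq, takagiSum_apply, coeFn_sum_smul_apply]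
  exact Finset.sum_congr rfl fun j _ => mul_right_comm _ _ _

/-! ### The space `h^{1/2}` -/

theorem memℓp_two_iff_summable {α : Type*} {E : α → Type*} [∀ i, NormedAddCommGroup (E i)]
    {f : ∀ i, E i} : Memℓp f 2 ↔ Summable fun i => ‖f i‖ ^ 2 := by
  rw [memℓp_gen_iff (by norm_num)]
  simp only [ENNReal.toReal_ofNat, Real.rpow_ofNat]

theorem hasSum_norm_sq {α : Type*} {E : α → Type*} [∀ i, NormedAddCommGroup (E i)] (f : lp E 2) :
    HasSum (fun i => ‖f i‖ ^ 2) (‖f‖ ^ 2) := by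
  simpa only [ENNReal.toReal_ofNat, Real.rpow_ofNat] using lp.hasSum_norm (by norm_num) f

theorem inH12_of_summable {c : ℕ → ℂ} (hc : Summable fun n : ℕ => (n + 1) * ‖c n‖ ^ 2) :
    InH12 c := by
  refine ⟨memℓp_two_iff_summable.mpr (hc.of_nonneg_of_le (fun n => sq_nonneg _) fun n => ?_),
    hc.of_nonneg_of_le (fun n => by positivity) fun n => ?_⟩
  · exact le_mul_of_one_le_left (sq_nonneg _) (le_add_of_nonneg_left n.cast_nonneg)
  · gcongr
    exact le_add_of_nonneg_right zero_le_one

theorem hasSum_norm_toL2_sq (c : H12) :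
    HasSum (fun n : ℕ => (n + 1) * ‖c.1 n‖ ^ 2) (‖c.toL2‖ ^ 2) := by
  refine (hasSum_norm_sq c.toL2).congr_fun fun n => ?_
  have hcoord : c.toL2 n = (√(1 + (n : ℝ)) : ℂ) * c.1 n := rfl
  rw [hcoord, norm_mul, mul_pow, Complex.norm_real, Real.norm_eq_abs, sq_abs,
    Real.sq_sqrt (by positivity), add_comm]

theorem tendsto_of_tendsto_norm_of_tendsto_inner {𝕜 E α : Type*} [RCLike 𝕜] [NormedAddCommGroup E]
    [InnerProductSpace 𝕜 E] {l : Filter α} {u : α → E} {a : E} {S : Set E}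
    (ha : a ∈ closure (Submodule.span 𝕜 S : Set E))
    (hinner : ∀ x ∈ S, Filter.Tendsto (fun t => ⟪x, u t⟫_𝕜) l (nhds ⟪x, a⟫_𝕜))
    (hnorm : Filter.Tendsto (fun t => ‖u t‖) l (nhds ‖a‖)) : Filter.Tendsto u l (nhds a) := by
  have hspan : ∀ x ∈ Submodule.span 𝕜 S,
      Filter.Tendsto (fun t => ⟪x, u t⟫_𝕜) l (nhds ⟪x, a⟫_𝕜) := by
    intro x hx
    induction hx using Submodule.span_induction with
    | mem x hx => exact hinner x hx
    | zero => simpa only [inner_zero_left] using tendsto_const_nhds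
    | add x y _ _ hx hy => simpa only [inner_add_left] using hx.add hy
    | smul c x _ hx => simpa only [inner_smul_left] using hx.const_mul _
  have hdist : ∀ x ∈ Submodule.span 𝕜 S,
      Filter.Tendsto (fun t => ‖x - u t‖ ^ 2) l (nhds (‖x - a‖ ^ 2)) := by
    intro x hx
    simp only [norm_sub_sq (𝕜 := 𝕜)]
    exact (tendsto_const_nhds.sub
      (((RCLike.continuous_re.tendsto _).comp (hspan x hx)).const_mul 2)).add (hnorm.pow 2)
  rw [Metric.tendsto_nhds]
  intro ε hε
  obtain ⟨x, hx, hxa⟩ := Metric.mem_closure_iff.mp ha (ε / 2) (half_pos hε)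
  rw [dist_comm, dist_eq_norm] at hxa
  have hsq : ‖x - a‖ ^ 2 < (ε / 2) ^ 2 := pow_lt_pow_left₀ hxa (norm_nonneg _) two_ne_zero
  filter_upwards [(hdist x hx).eventually_lt_const hsq] with t ht
  have hxt : dist (u t) x < ε / 2 := by
    rw [dist_comm, dist_eq_norm]
    exact lt_of_pow_lt_pow_left₀ 2 (half_pos hε).le ht
  exact (dist_triangle_right (u t) a x).trans_lt
    (by rw [dist_comm a x, dist_eq_norm x a]; linarith)

theorem mem_closure_span_single {𝕜 α : Type*} [RCLike 𝕜] [DecidableEq α] {p : ℝ≥0∞}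
    [Fact (1 ≤ p)] (hp : p ≠ ∞) (x : lp (fun _ : α => 𝕜) p) :
    x ∈ closure ↑(Submodule.span 𝕜 (Set.range fun i : α => lp.single (E := fun _ => 𝕜) p i 1)) := by
  refine mem_closure_of_tendsto (lp.hasSum_single hp x)
    (Filter.Eventually.of_forall fun s => Submodule.sum_mem _ fun i _ => ?_)
  rw [← mul_one (x i), ← smul_eq_mul, lp.single_smul]
  exact Submodule.smul_mem _ _ (Submodule.subset_span ⟨i, rfl⟩)

/-- Coordinatewise continuity is weak continuity on bounded sets, and weak convergence together
with convergence of the norms is strong convergence. -/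
theorem continuous_of_norm_toL2_eq {X : Type*} [TopologicalSpace X] {F : X → H12} {r : ℝ}
    (hcoord : ∀ n, Continuous fun t => (F t).1 n) (hnorm : ∀ t, ‖(F t).toL2‖ = r) :
    Continuous F := by
  have hind : Topology.IsInducing H12.toL2 := ⟨rfl⟩
  rw [hind.continuous_iff, continuous_iff_continuousAt]
  intro t
  refine tendsto_of_tendsto_norm_of_tendsto_inner
    (mem_closure_span_single ENNReal.ofNat_ne_top _) ?_ ?_
  · rintro _ ⟨n, rfl⟩
    simp only [lp.inner_single_left, RCLike.inner_apply, map_one, mul_one]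
    exact (continuous_const.mul (hcoord n)).tendsto t
  · simp only [Function.comp_apply, hnorm]
    exact tendsto_const_nhds

/-! ### The Hilbert–Schmidt norm of a Hankel matrix -/

theorem hasSum_succ_nsmul_of_hasSum_prod {E : Type*} [AddCommMonoid E] [TopologicalSpace E]
    [ContinuousAdd E] [RegularSpace E] {u : ℕ → E} {s : E}
    (h : HasSum (fun q : ℕ × ℕ => u (q.1 + q.2)) s) : HasSum (fun n => (n + 1) • u n) s := by
  rw [← Finset.HasAntidiagonal.sigmaAntidiagonalEquivProd.hasSum_iff] at h
  refine h.sigma fun n => ?_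
  have hn := hasSum_fintype fun q : Finset.HasAntidiagonal.antidiagonal n => u (q.1.1 + q.1.2)
  rw [Finset.sum_coe_sort _ fun q : ℕ × ℕ => u (q.1 + q.2),
    Finset.sum_congr rfl fun q hq => by rw [Finset.HasAntidiagonal.mem_antidiagonal.mp hq],
    Finset.sum_const, Finset.Nat.card_antidiagonal] at hn
  exact hn

theorem hasSum_prod_of_nonneg {α β : Type*} {u : α × β → ℝ} (hu : 0 ≤ u) {v : α → ℝ} {s : ℝ}
    (hv : ∀ a, HasSum (fun b => u (a, b)) (v a)) (hs : HasSum v s) : HasSum u s := by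
  have hsum : Summable u := (summable_prod_of_nonneg hu).mpr
    ⟨fun a => (hv a).summable, hs.summable.congr fun a => ((hv a).tsum_eq).symm⟩
  exact (hsum.hasSum.prod_fiberwise hv).unique hs ▸ hsum.hasSum

theorem norm_sum_smul_sq {𝕜 E ι : Type*} [RCLike 𝕜] [NormedAddCommGroup E] [InnerProductSpace 𝕜 E]
    [Fintype ι] {f : ι → E} (hf : Orthonormal 𝕜 f) (w : ι → 𝕜) :
    ‖∑ j, w j • f j‖ ^ 2 = ∑ j, ‖w j‖ ^ 2 :=
  hf.orthogonalFamily.norm_sum w Finset.univ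

theorem hasSum_succ_mul_norm_sq_of_takagi {ι : Type*} [Fintype ι] {f : ι → L2}
    (hf : Orthonormal ℂ f) {s : ι → ℂ} {c : ℕ → ℂ}
    (hc : ∀ n p, ∑ j, s j * f j n * f j p = c (n + p)) :
    HasSum (fun n : ℕ => (n + 1) * ‖c n‖ ^ 2) (∑ j, ‖s j‖ ^ 2) := by
  have hrow (n : ℕ) : HasSum (fun p => ‖c (n + p)‖ ^ 2) (∑ j, ‖s j‖ ^ 2 * ‖f j n‖ ^ 2) := by
    simpa only [coeFn_sum_smul_apply, hc, norm_sum_smul_sq hf, norm_mul, mul_pow] using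
      hasSum_norm_sq (∑ j, (s j * f j n) • f j)
  have htot : HasSum (fun n => ∑ j, ‖s j‖ ^ 2 * ‖f j n‖ ^ 2) (∑ j, ‖s j‖ ^ 2) := by
    simpa only [hf.1, one_pow, mul_one] using
      hasSum_sum fun j (_ : j ∈ Finset.univ) => (hasSum_norm_sq (f j)).mul_left (‖s j‖ ^ 2)
  have hprod : HasSum (fun q : ℕ × ℕ => ‖c (q.1 + q.2)‖ ^ 2) (∑ j, ‖s j‖ ^ 2) :=
    hasSum_prod_of_nonneg (fun _ => sq_nonneg _) hrow htot
  simpa only [nsmul_eq_mul, Nat.cast_add, Nat.cast_one] using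
    hasSum_succ_nsmul_of_hasSum_prod (u := fun n => ‖c n‖ ^ 2) hprod

/-! ### Hankel operators of balanced realizations -/

section RotatedFamily

variable {ι κ : Type*} [Fintype ι]

/-- The family `g k = ∑ j, O j k • f j` obtained from `f` by the change of basis `O`. -/
def rotatedFamily {R M : Type*} [Semiring R] [AddCommMonoid M] [Module R M] (f : ι → M)
    (O : Matrix ι κ R) (k : κ) : M :=
  ∑ j, O j k • f j

theorem rotatedFamily_one {R M : Type*} [Semiring R] [AddCommMonoid M] [Module R M]
    [DecidableEq ι] (f : ι → M) : rotatedFamily f (1 : Matrix ι ι R) = f := by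
  ext k
  simp only [rotatedFamily, Matrix.one_apply, ite_smul, one_smul, zero_smul, Finset.sum_ite_eq',
    Finset.mem_univ, if_true]

theorem rotatedFamily_mul {R M : Type*} [CommSemiring R] [AddCommMonoid M] [Module R M] [Fintype κ]
    {κ' : Type*} (f : ι → M) (O : Matrix ι κ R) (P : Matrix κ κ' R) :
    rotatedFamily f (O * P) = rotatedFamily (rotatedFamily f O) P := by
  ext l
  simp only [rotatedFamily, Matrix.mul_apply, Finset.sum_smul, Finset.smul_sum, smul_smul]
  rw [Finset.sum_comm]
  simp only [mul_comm]

theorem orthonormal_rotatedFamily {𝕜 E : Type*} [RCLike 𝕜] [NormedAddCommGroup E]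
    [InnerProductSpace 𝕜 E] [DecidableEq κ] {f : ι → E} (hf : Orthonormal 𝕜 f)
    {O : Matrix ι κ 𝕜} (hO : O.conjTranspose * O = 1) : Orthonormal 𝕜 (rotatedFamily f O) := by
  rw [orthonormal_iff_ite]
  intro k l
  rw [rotatedFamily, rotatedFamily, hf.inner_sum, ← Matrix.one_apply, ← hO]
  rfl

end RotatedFamily

namespace IsBalanced

open Matrix

variable {ι : Type*} [Fintype ι] [DecidableEq ι] {D : ι → ℂ} {K : Matrix ι ι ℂ} {a : ι → ℂ}

theorem memℓp_observabilityRow (h : IsBalanced D K a) (j : ι) :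
    Memℓp (fun n => observabilityRow D K a n j) 2 := by
  refine memℓp_two_iff_summable.mpr
    (summable_of_sum_range_le (c := 1) (fun _ => sq_nonneg _) fun n => ?_)
  have hself (A : Matrix ι ι ℂ) : (Aᴴ * A) j j = ((∑ i, ‖A i j‖ ^ 2 : ℝ) : ℂ) := by
    simp only [mul_apply, conjTranspose_apply, RCLike.star_def, Complex.conj_mul',
      Complex.ofReal_sum, Complex.ofReal_pow]
  have hsum := h.sum_range_star_mul_observabilityRow n j j
  simp only [RCLike.star_def, Complex.conj_mul', Matrix.sub_apply, one_apply_eq, hself] at hsum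
  have hreal : ∑ m ∈ Finset.range n, ‖observabilityRow D K a m j‖ ^ 2 =
      1 - ∑ i, ‖(stateMatrix D K ^ n) i j‖ ^ 2 := by exact_mod_cast hsum
  exact hreal.trans_le (sub_le_self _ (Finset.sum_nonneg fun _ _ => sq_nonneg _))

/-- The columns of the observability matrix of a balanced realization, as vectors of `ℓ²`. -/
def takagiVector (h : IsBalanced D K a) (j : ι) : L2 := ⟨_, h.memℓp_observabilityRow j⟩

theorem takagiVector_apply (h : IsBalanced D K a) (j : ι) (n : ℕ) :
    h.takagiVector j n = observabilityRow D K a n j := rfl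

theorem orthonormal_takagiVector (h : IsBalanced D K a)
    (hinj : Function.Injective fun j => ‖D j‖) (ha : ∀ j, a j ≠ 0) :
    Orthonormal ℂ h.takagiVector := by
  rw [orthonormal_iff_ite]
  intro i j
  rw [← Matrix.one_apply]
  refine tendsto_nhds_unique (lp.hasSum_inner _ _).tendsto_sum_nat
    ((h.tendsto_sum_star_mul_observabilityRow hinj ha i j).congr fun n => ?_)
  exact Finset.sum_congr rfl fun m _ => by
    rw [takagiVector_apply, takagiVector_apply, RCLike.inner_apply, RCLike.star_def, mul_comm]

theorem sum_mul_takagiVector (h : IsBalanced D K a) (n p : ℕ) :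
    ∑ j, D j * h.takagiVector j n * h.takagiVector j p = realizedSeq D K a (n + p) := by
  rw [← observabilityRow_dotProduct_diagonal_mulVec h.ne_zero h.transpose_eq]
  exact Finset.sum_congr rfl fun j _ => by
    rw [mulVec_diagonal, takagiVector_apply, takagiVector_apply, mul_assoc, mul_left_comm]

theorem isHankelOp_takagiSum (h : IsBalanced D K a) :
    IsHankelOp (realizedSeq D K a) (takagiSum h.takagiVector D) :=
  _root_.isHankelOp_takagiSum h.sum_mul_takagiVector

theorem isHankelOp_takagiSum_rotatedFamily (h : IsBalanced D K a) {κ : Type*} [Fintype κ]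
    [DecidableEq κ] {O : Matrix ι κ ℂ} {Q : κ → ℂ} (hK : K = O * diagonal Q * Oᵀ) :
    IsHankelOp (shiftSeq (realizedSeq D K a)) (takagiSum (rotatedFamily h.takagiVector O) Q) := by
  refine _root_.isHankelOp_takagiSum fun n p => ?_
  have hcoord (k : κ) (m : ℕ) :
      rotatedFamily h.takagiVector O k m = (observabilityRow D K a m ᵥ* O) k := by
    rw [rotatedFamily, coeFn_sum_smul_apply]
    exact Finset.sum_congr rfl fun j _ => mul_comm _ _
  have hexpand := observabilityRow_dotProduct_mulVec (a := a) h.ne_zero h.transpose_eq n p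
  have hfactor (v : ι → ℂ) : K *ᵥ v = O *ᵥ (diagonal Q *ᵥ (v ᵥ* O)) := by
    rw [hK, ← mulVec_mulVec, ← mulVec_mulVec, mulVec_transpose]
  rw [shiftSeq, ← hexpand, hfactor, dotProduct_mulVec]
  exact Finset.sum_congr rfl fun k _ => by
    rw [mulVec_diagonal, hcoord, hcoord, mul_assoc, mul_left_comm]

theorem hasSum_norm_sq_realizedSeq (h : IsBalanced D K a)
    (hinj : Function.Injective fun j => ‖D j‖) (ha : ∀ j, a j ≠ 0) :
    HasSum (fun n : ℕ => (n + 1) * ‖realizedSeq D K a n‖ ^ 2) (∑ j, ‖D j‖ ^ 2) :=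
  hasSum_succ_mul_norm_sq_of_takagi (h.orthonormal_takagiVector hinj ha) h.sum_mul_takagiVector

end IsBalanced

/-! ### The sequence with prescribed Takagi data -/

section TakagiSeq

open Matrix

theorem star_ofReal_comp {ι : Type*} (a : ι → ℝ) : star (fun j => (a j : ℂ)) = fun j => (a j : ℂ) :=
  funext fun j => Complex.conj_ofReal (a j)

theorem map_ofRealHom_diagonal {ι : Type*} [DecidableEq ι] (x : ι → ℝ) :
    (diagonal x).map Complex.ofRealHom = diagonal fun j => (x j : ℂ) :=
  diagonal_map (map_zero Complex.ofRealHom)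

theorem map_ofRealHom_diagonal_sub_vecMulVec {ι : Type*} [DecidableEq ι] (x a : ι → ℝ) :
    (diagonal x - vecMulVec a a).map Complex.ofRealHom =
      (diagonal fun j => (x j : ℂ)) - vecMulVec (fun j => (a j : ℂ)) fun j => (a j : ℂ) := by
  rw [Matrix.map_sub _ (map_sub _), map_ofRealHom_diagonal]
  congr 1
  ext i j
  exact Complex.ofReal_mul (a i) (a j)

variable {ι : Type*} [Fintype ι] [DecidableEq ι] {x y : ι → ℝ} {D Q : ι → ℂ}

/-- The Cauchy orthogonal matrix over `ℂ`. -/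
def cauchyUnitary (x y : ι → ℝ) : Matrix ι ι ℂ := (cauchyOrthogonal x y).map Complex.ofRealHom

/-- The sequence whose Hankel operator and shifted Hankel operator have Takagi values `D` and `Q`,
where `x = |D|²` and `y = |Q|²` are interlaced. The Takagi bases of the two operators differ by
the Cauchy orthogonal matrix, which makes the diagonal matrix `Q` of the shifted operator into the
coupling matrix of the realization. -/
def takagiSeq (x y : ι → ℝ) (D Q : ι → ℂ) : ℕ → ℂ :=
  realizedSeq D (cauchyUnitary x y * diagonal Q * (cauchyUnitary x y)ᵀ)
    fun j => (cauchyAmplitude x y j : ℂ)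

theorem cauchyUnitary_conjTranspose (x y : ι → ℝ) :
    (cauchyUnitary x y)ᴴ = (cauchyUnitary x y)ᵀ := by
  ext
  exact Complex.conj_ofReal _

theorem Interlaced.cauchyUnitary_conjTranspose_mul_self [LinearOrder ι] (h : Interlaced x y) :
    (cauchyUnitary x y)ᴴ * cauchyUnitary x y = 1 := by
  rw [cauchyUnitary_conjTranspose, cauchyUnitary, ← transpose_map, ← Matrix.map_mul,
    h.cauchyOrthogonal_transpose_mul_self, Matrix.map_one _ (map_zero _) (map_one _)]

theorem Interlaced.isBalanced [LinearOrder ι] (h : Interlaced x y) (hy : ∀ k, 0 < y k)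
    (hD : ∀ j, ‖D j‖ ^ 2 = x j) (hQ : ∀ k, ‖Q k‖ ^ 2 = y k) :
    IsBalanced D (cauchyUnitary x y * diagonal Q * (cauchyUnitary x y)ᵀ)
      fun j => (cauchyAmplitude x y j : ℂ) where
  ne_zero j hj := by
    have hx := h.left_pos hy j
    rw [← hD j, hj, norm_zero, zero_pow two_ne_zero] at hx
    exact hx.false
  transpose_eq := by
    rw [transpose_mul, transpose_mul, transpose_transpose, diagonal_transpose, Matrix.mul_assoc]
  conjTranspose_mul_self := by
    have hnormSq (w : ι → ℂ) {v : ι → ℝ} (hw : ∀ j, ‖w j‖ ^ 2 = v j) (j : ι) :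
        star (w j) * w j = v j := by
      rw [RCLike.star_def, Complex.conj_mul', ← hw, Complex.ofReal_pow]
    have hprod : (cauchyUnitary x y * diagonal Q * (cauchyUnitary x y)ᵀ)ᴴ *
        (cauchyUnitary x y * diagonal Q * (cauchyUnitary x y)ᵀ) =
        cauchyUnitary x y * (diagonal fun k => star (Q k) * Q k) * (cauchyUnitary x y)ᵀ := by
      rw [← diagonal_mul_diagonal, ← cauchyUnitary_conjTranspose]
      simp only [conjTranspose_mul, conjTranspose_conjTranspose, diagonal_conjTranspose,
        Matrix.mul_assoc]
      rw [← Matrix.mul_assoc (cauchyUnitary x y)ᴴ (cauchyUnitary x y),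
        h.cauchyUnitary_conjTranspose_mul_self, Matrix.one_mul]
      rfl
    simp only [hnormSq Q hQ] at hprod
    simp only [hprod, hnormSq D hD]
    rw [← map_ofRealHom_diagonal, cauchyUnitary, ← transpose_map, ← Matrix.map_mul,
      ← Matrix.map_mul, h.cauchyOrthogonal_conj_diagonal, map_ofRealHom_diagonal_sub_vecMulVec,
      star_ofReal_comp]

end TakagiSeq

/-! ### Takagi data of a Hankel operator -/

section RankOnePerturbation

open Matrix

variable {𝕜 E ι κ : Type*} [RCLike 𝕜] [NormedAddCommGroup E] [InnerProductSpace 𝕜 E] [Fintype ι]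
  {f : ι → E} {T : E →ₗ[𝕜] E} {v : E}

theorem sum_norm_inner_sq_div_eq_one (hT : T.IsSymmetric) {x : ι → ℝ}
    (hf : ∀ j, T (f j) = (x j : 𝕜) • f j) (hv : v = ∑ j, ⟪f j, v⟫_𝕜 • f j) {g : E} {y : ℝ}
    (hg : T g - ⟪v, g⟫_𝕜 • v = (y : 𝕜) • g) (hvg : ⟪v, g⟫_𝕜 ≠ 0) (hxy : ∀ j, x j ≠ y) :
    ∑ j, ‖⟪f j, v⟫_𝕜‖ ^ 2 / (x j - y) = 1 := by
  have hcoord (j : ι) :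
      ((x j - y : ℝ) : 𝕜) * ⟪f j, g⟫_𝕜 = ⟪v, g⟫_𝕜 * ⟪f j, v⟫_𝕜 := by
    have h := congrArg (fun w => ⟪f j, w⟫_𝕜) hg
    simp only [inner_sub_right, inner_smul_right, ← hT (f j) g, hf, inner_smul_left,
      RCLike.conj_ofReal] at h
    rw [RCLike.ofReal_sub]
    linear_combination h
  have hterm (j : ι) : conj ⟪f j, v⟫_𝕜 * ⟪f j, g⟫_𝕜 =
      ⟪v, g⟫_𝕜 * ((‖⟪f j, v⟫_𝕜‖ ^ 2 / (x j - y) : ℝ) : 𝕜) := by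
    have hne : ((x j - y : ℝ) : 𝕜) ≠ 0 := RCLike.ofReal_ne_zero.mpr (sub_ne_zero.mpr (hxy j))
    rw [RCLike.ofReal_div, RCLike.ofReal_pow, ← RCLike.conj_mul, mul_div_assoc', eq_div_iff hne]
    linear_combination conj ⟪f j, v⟫_𝕜 * hcoord j
  have hsum : ⟪v, g⟫_𝕜 * ((∑ j, ‖⟪f j, v⟫_𝕜‖ ^ 2 / (x j - y) : ℝ) : 𝕜) = ⟪v, g⟫_𝕜 := by
    conv_rhs => rw [hv, sum_inner]
    simp only [inner_smul_left, hterm, RCLike.ofReal_sum, Finset.mul_sum]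
  exact RCLike.ofReal_injective ((mul_right_eq_self₀.mp hsum).resolve_right hvg |>.trans
    RCLike.ofReal_one.symm)

theorem map_rotatedFamily_sub_inner_smul [DecidableEq ι] [Fintype κ] [DecidableEq κ]
    (hf : Orthonormal 𝕜 f) {z : ι → 𝕜} (hTf : ∀ j, T (f j) = z j • f j) {a : ι → 𝕜}
    (hv : v = ∑ j, a j • f j) {O : Matrix ι κ 𝕜} {w : κ → 𝕜}
    (hO : (diagonal z - vecMulVec a (star a)) * O = O * diagonal w) (k : κ) :
    T (rotatedFamily f O k) - ⟪v, rotatedFamily f O k⟫_𝕜 • v = w k • rotatedFamily f O k := by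
  have hinner : ⟪v, rotatedFamily f O k⟫_𝕜 = (star a ᵥ* O) k := by
    rw [hv, rotatedFamily, hf.inner_sum]
    rfl
  rw [hinner, hv, rotatedFamily, map_sum, Finset.smul_sum, Finset.smul_sum,
    ← Finset.sum_sub_distrib]
  refine Finset.sum_congr rfl fun j _ => ?_
  have hentry := congrFun (congrFun hO j) k
  rw [Matrix.sub_mul, vecMulVec_mul, Matrix.sub_apply, diagonal_mul, mul_diagonal,
    vecMulVec_apply] at hentry
  rw [map_smul, hTf, smul_smul, smul_smul, smul_smul, ← sub_smul]
  congr 1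
  linear_combination hentry

end RankOnePerturbation

theorem apply_star_eq_rotatedFamily {ι κ : Type*} [Fintype ι] [DecidableEq ι] [Fintype κ]
    [DecidableEq κ] {Γ : L2 →L[ℂ] L2} {f : ι → L2} {O : Matrix ι κ ℂ} {Q : κ → ℂ}
    (hO : O * O.conjTranspose = 1)
    (hQ : ∀ k, Γ (star (rotatedFamily f O k)) = Q k • rotatedFamily f O k) (j : ι) :
    Γ (star (f j)) = rotatedFamily f (O * Matrix.diagonal Q * O.transpose) j := by
  have hf : f = rotatedFamily (rotatedFamily f O) O.conjTranspose := by
    rw [← rotatedFamily_mul, hO, rotatedFamily_one]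
  rw [Matrix.mul_assoc, rotatedFamily_mul]
  conv_lhs => rw [hf, rotatedFamily, star_sum, map_sum]
  refine Finset.sum_congr rfl fun k _ => ?_
  rw [star_smul, map_smul, hQ, smul_smul, Matrix.diagonal_mul, Matrix.conjTranspose_apply,
    star_star, Matrix.transpose_apply, mul_comm]

theorem isSymmetric_opT (Γ : L2 →L[ℂ] L2) : (opT Γ).toLinearMap.IsSymmetric :=
  (ContinuousLinearMap.isPositive_self_comp_adjoint Γ).isSymmetric

namespace HasSimpleSVals

open Module.End

variable {N : ℕ} {lam : Fin N → ℝ} {Γ : L2 →L[ℂ] L2}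

theorem hasEigenvalue (h : HasSimpleSVals Γ N lam) (j : Fin N) :
    HasEigenvalue (opT Γ).toLinearMap ((lam j : ℂ) ^ 2) :=
  (h.2.1.symm.subset ⟨j, rfl⟩).2

theorem exists_unit_eigenvector (h : HasSimpleSVals Γ N lam) (j : Fin N) :
    ∃ v : L2, ‖v‖ = 1 ∧ opT Γ v = (lam j : ℂ) ^ 2 • v := by
  obtain ⟨v, hv, hv₀⟩ := (h.hasEigenvalue j).exists_hasEigenvector
  exact ⟨(‖v‖⁻¹ : ℂ) • v, norm_smul_inv_norm hv₀,
    mem_eigenspace_iff.mp (Submodule.smul_mem _ _ hv)⟩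

theorem exists_eq_smul (h : HasSimpleSVals Γ N lam) {j : Fin N} {v w : L2} (hv₀ : v ≠ 0)
    (hv : opT Γ v = (lam j : ℂ) ^ 2 • v) (hw : opT Γ w = (lam j : ℂ) ^ 2 • w) :
    ∃ d : ℂ, w = d • v := by
  obtain ⟨d, hd⟩ := (finrank_eq_one_iff_of_nonzero' (⟨v, mem_eigenspace_iff.mpr hv⟩ :
    eigenspace (opT Γ).toLinearMap ((lam j : ℂ) ^ 2))
    fun h₀ => hv₀ (congrArg Subtype.val h₀)).mp (h.2.2 j) ⟨w, mem_eigenspace_iff.mpr hw⟩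
  exact ⟨d, (congrArg Subtype.val hd).symm⟩

theorem eq_zero_of_opT_eq_smul (h : HasSimpleSVals Γ N lam) {w : ℂ} (hw₀ : w ≠ 0)
    (hw : ∀ j, (lam j : ℂ) ^ 2 ≠ w) {v : L2} (hv : opT Γ v = w • v) : v = 0 := by
  by_contra hv₀
  obtain ⟨j, hj⟩ := h.2.1.subset ⟨hw₀, hasEigenvalue_of_hasEigenvector
    ⟨mem_eigenspace_iff.mpr hv, hv₀⟩⟩
  exact hw j hj

theorem exists_orthonormal_eigenvectors (h : HasSimpleSVals Γ N lam) (hpos : ∀ j, 0 < lam j)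
    (hinj : Function.Injective lam) :
    ∃ f : Fin N → L2, Orthonormal ℂ f ∧ (∀ j, opT Γ (f j) = (lam j : ℂ) ^ 2 • f j) ∧
      LinearMap.range Γ.toLinearMap = Submodule.span ℂ (Set.range f) := by
  choose f hf_norm hf using h.exists_unit_eigenvector
  have hsq := injective_ofReal_sq (fun j => (hpos j).le) hinj
  have hfo : Orthonormal ℂ f := ⟨hf_norm, fun i j hij =>
    (isSymmetric_opT Γ).orthogonalFamily_eigenspaces (hsq.ne hij)
      ⟨f i, mem_eigenspace_iff.mpr (hf i)⟩ ⟨f j, mem_eigenspace_iff.mpr (hf j)⟩⟩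
  refine ⟨f, hfo, hf, ?_⟩
  have hle : Submodule.span ℂ (Set.range f) ≤ LinearMap.range Γ.toLinearMap := by
    refine Submodule.span_le.mpr (Set.range_subset_iff.mpr fun j =>
      ⟨((lam j : ℂ) ^ 2)⁻¹ • ContinuousLinearMap.adjoint Γ (f j), ?_⟩)
    have hne : (lam j : ℂ) ^ 2 ≠ 0 := pow_ne_zero 2 (Complex.ofReal_ne_zero.mpr (hpos j).ne')
    rw [map_smul]
    exact (inv_smul_eq_iff₀ hne).mpr (hf j)
  have hrank : Module.rank ℂ (LinearMap.range Γ.toLinearMap) = N := h.1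
  have : FiniteDimensional ℂ (LinearMap.range Γ.toLinearMap) :=
    Module.rank_lt_aleph0_iff.mp (hrank ▸ Cardinal.natCast_lt_aleph0)
  exact (Submodule.eq_of_le_of_finrank_eq hle (by
    rw [finrank_span_eq_card hfo.linearIndependent, Fintype.card_fin,
      Module.finrank_eq_of_rank_eq hrank])).symm

/-- `v ↦ Γ v̄` is an antilinear square root of `ΓΓ*`, so it preserves the eigenline of `v`. -/
theorem exists_takagi_value (h : HasSimpleSVals Γ N lam) {c : ℕ → ℂ} (hΓ : IsHankelOp c Γ)
    {j : Fin N} (hj : 0 ≤ lam j) {v : L2} (hv₀ : v ≠ 0) (hv : opT Γ v = (lam j : ℂ) ^ 2 • v) :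
    ∃ d : ℂ, ‖d‖ = lam j ∧ Γ (star v) = d • v := by
  have himage : opT Γ (Γ (star v)) = (lam j : ℂ) ^ 2 • Γ (star v) := by
    rw [hΓ.opT_apply, ← hΓ.opT_apply v, hv, star_smul, map_smul, ← Complex.ofReal_pow,
      RCLike.star_def, Complex.conj_ofReal]
  obtain ⟨d, hd⟩ := h.exists_eq_smul hv₀ hv himage
  have hsq : star d * d = (lam j : ℂ) ^ 2 := by
    rw [hΓ.opT_apply, hd, star_smul, map_smul, hd, smul_smul] at hv
    exact smul_left_injective ℂ hv₀ hv
  rw [RCLike.star_def, Complex.conj_mul'] at hsq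
  exact ⟨d, (pow_left_inj₀ (norm_nonneg d) hj two_ne_zero).mp (by exact_mod_cast hsq), hd⟩

end HasSimpleSVals

section PhaseNormalization

variable {𝕜 E ι : Type*} [RCLike 𝕜] [NormedAddCommGroup E] [InnerProductSpace 𝕜 E]

theorem orthonormal_smul_of_norm_eq_one {f : ι → E} (hf : Orthonormal 𝕜 f) {u : ι → 𝕜}
    (hu : ∀ j, ‖u j‖ = 1) : Orthonormal 𝕜 fun j => u j • f j :=
  ⟨fun j => by rw [norm_smul, hu, hf.norm_eq_one, mul_one], fun i j hij =>
    (inner_smul_left _ _ _).trans (by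
      rw [inner_smul_right, hf.inner_eq_zero hij, mul_zero, mul_zero])⟩

theorem eq_sum_inner_smul_of_mem_span [Fintype ι] {f : ι → E} (hf : Orthonormal 𝕜 f) {v : E}
    (hv : v ∈ Submodule.span 𝕜 (Set.range f)) : v = ∑ j, ⟪f j, v⟫_𝕜 • f j := by
  obtain ⟨w, rfl⟩ := (Submodule.mem_span_range_iff_exists_fun 𝕜).mp hv
  simp only [hf.inner_right_fintype]

end PhaseNormalization

namespace IsHankelOp

variable {N : ℕ} {lam mu : Fin N → ℝ} {c : ℕ → ℂ} {Γ Γt : L2 →L[ℂ] L2}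

theorem norm_inner_apply_e0_eq_cauchyAmplitude (hΓ : IsHankelOp c Γ)
    (hΓt : IsHankelOp (shiftSeq c) Γt) (hlam : HasSimpleSVals Γ N lam)
    (hmu : HasSimpleSVals Γt N mu) (hmu₀ : ∀ k, mu k ≠ 0)
    (h : Interlaced (fun j => lam j ^ 2) fun k => mu k ^ 2) {f : Fin N → L2}
    (hf : ∀ j, opT Γ (f j) = (lam j : ℂ) ^ 2 • f j)
    (he0 : Γ e0 = ∑ j, ⟪f j, Γ e0⟫_ℂ • f j) (j : Fin N) :
    ‖⟪f j, Γ e0⟫_ℂ‖ = cauchyAmplitude (fun j => lam j ^ 2) (fun k => mu k ^ 2) j := by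
  refine congrFun (h.eq_cauchyAmplitude_of_sum_sq_div (b := fun j => ‖⟪f j, Γ e0⟫_ℂ‖)
    (fun j => norm_nonneg _) fun k => ?_) j
  obtain ⟨g, hg_norm, hg⟩ := hmu.exists_unit_eigenvector k
  rw [hΓ.opT_shift_apply hΓt] at hg
  have hinner : ⟪Γ e0, g⟫_ℂ ≠ 0 := by
    intro h₀
    rw [h₀, zero_smul, sub_zero] at hg
    have hg₀ : g = 0 := hlam.eq_zero_of_opT_eq_smul
      (pow_ne_zero 2 (Complex.ofReal_ne_zero.mpr (hmu₀ k)))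
      (fun j => by exact_mod_cast h.left_ne_right j k) hg
    rw [hg₀, norm_zero] at hg_norm
    exact zero_ne_one hg_norm
  exact sum_norm_inner_sq_div_eq_one (isSymmetric_opT Γ)
    (fun j => by simpa using hf j) he0 (by simpa using hg) hinner
    fun j => h.left_ne_right j k

/-- Every coordinate of `Γ e₀` is nonzero, so the phases of the eigenvectors can be chosen to make
the coordinates positive. -/
theorem exists_normalized_eigenvectors (hΓ : IsHankelOp c Γ)
    (hΓt : IsHankelOp (shiftSeq c) Γt) (hlam : HasSimpleSVals Γ N lam)
    (hmu : HasSimpleSVals Γt N mu) (hlam₀ : ∀ j, 0 < lam j) (hmu₀ : ∀ k, mu k ≠ 0)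
    (h : Interlaced (fun j => lam j ^ 2) fun k => mu k ^ 2) :
    ∃ f : Fin N → L2, Orthonormal ℂ f ∧ (∀ j, opT Γ (f j) = (lam j : ℂ) ^ 2 • f j) ∧
      Γ e0 = ∑ j, (cauchyAmplitude (fun j => lam j ^ 2) (fun k => mu k ^ 2) j : ℂ) • f j := by
  set a := cauchyAmplitude (fun j => lam j ^ 2) (fun k => mu k ^ 2)
  obtain ⟨f, hf, hfΓ, hrange⟩ := hlam.exists_orthonormal_eigenvectors hlam₀
    (Function.Injective.of_comp (f := (· ^ 2)) h.strictAnti_left.injective)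
  have he0 : Γ e0 = ∑ j, ⟪f j, Γ e0⟫_ℂ • f j :=
    eq_sum_inner_smul_of_mem_span hf (hrange ▸ LinearMap.mem_range_self Γ.toLinearMap e0)
  have hnorm (j : Fin N) : ‖⟪f j, Γ e0⟫_ℂ‖ = a j :=
    hΓ.norm_inner_apply_e0_eq_cauchyAmplitude hΓt hlam hmu hmu₀ h hfΓ he0 j
  have ha (j : Fin N) : (a j : ℂ) ≠ 0 := Complex.ofReal_ne_zero.mpr (h.cauchyAmplitude_pos j).ne'
  have hphase (j : Fin N) : ‖⟪f j, Γ e0⟫_ℂ / a j‖ = 1 := by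
    rw [norm_div, hnorm, Complex.norm_of_nonneg (h.cauchyAmplitude_pos j).le,
      div_self (h.cauchyAmplitude_pos j).ne']
  refine ⟨fun j => (⟪f j, Γ e0⟫_ℂ / a j) • f j, orthonormal_smul_of_norm_eq_one hf hphase,
    fun j => by rw [map_smul, hfΓ, smul_comm], ?_⟩
  simp only [smul_smul, mul_div_cancel₀ _ (ha _)]
  exact he0

end IsHankelOp

section Recursion

variable {ι : Type*} [Fintype ι] [DecidableEq ι] {c : ℕ → ℂ} {Γ Γt : L2 →L[ℂ] L2} {f : ι → L2}
  {D a : ι → ℂ} {K : Matrix ι ι ℂ}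

namespace IsHankelOp

theorem coeFn_eq_observabilityRow (hΓ : IsHankelOp c Γ) (hΓt : IsHankelOp (shiftSeq c) Γt)
    (hD : ∀ j, D j ≠ 0) (hf : ∀ j, Γ (star (f j)) = D j • f j)
    (hK : ∀ j, Γt (star (f j)) = rotatedFamily f K j) (ha : ∀ j, ⟪f j, Γ e0⟫_ℂ = a j)
    (n : ℕ) (j : ι) : f j n = observabilityRow D K a n j := by
  have hcoord (j : ι) (n : ℕ) : (Γ (star (f j)) : ℕ → ℂ) n = f j n * D j := by
    rw [hf, lp.coeFn_smul, Pi.smul_apply, smul_eq_mul, mul_comm]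
  induction n generalizing j with
  | zero =>
    rw [observabilityRow_zero, Pi.div_apply, eq_div_iff (hD j), ← hcoord, hΓ.apply_star_zero, ha]
  | succ n ih =>
    rw [observabilityRow_succ, stateMatrix, ← Matrix.vecMul_vecMul, Matrix.vecMul_diagonal,
      Pi.inv_apply, ← div_eq_mul_inv, eq_div_iff (hD j), ← hcoord, ← hΓ.shift_apply hΓt, hK,
      rotatedFamily, coeFn_sum_smul_apply]
    exact Finset.sum_congr rfl fun i _ => by rw [ih, mul_comm]

theorem eq_realizedSeq (hΓ : IsHankelOp c Γ) (hΓt : IsHankelOp (shiftSeq c) Γt)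
    (hfo : Orthonormal ℂ f) (hD : ∀ j, D j ≠ 0) (hf : ∀ j, Γ (star (f j)) = D j • f j)
    (hK : ∀ j, Γt (star (f j)) = rotatedFamily f K j) (he0 : Γ e0 = ∑ j, a j • f j) :
    c = realizedSeq D K a := by
  have ha (j : ι) : ⟪f j, Γ e0⟫_ℂ = a j := by rw [he0, hfo.inner_right_fintype]
  ext n
  rw [← hΓ.apply_e0, he0, coeFn_sum_smul_apply]
  exact Finset.sum_congr rfl fun j _ => by
    rw [hΓ.coeFn_eq_observabilityRow hΓt hD hf hK ha, mul_comm]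

end IsHankelOp

end Recursion

theorem Interlaced.map_rotatedFamily_cauchyUnitary {ι E : Type*} [Fintype ι] [DecidableEq ι]
    [LinearOrder ι] [NormedAddCommGroup E] [InnerProductSpace ℂ E] {x y : ι → ℝ}
    (h : Interlaced x y) {f : ι → E} (hf : Orthonormal ℂ f) {T : E →ₗ[ℂ] E}
    (hT : ∀ j, T (f j) = (x j : ℂ) • f j) {v : E}
    (hv : v = ∑ j, (cauchyAmplitude x y j : ℂ) • f j) (k : ι) :
    T (rotatedFamily f (cauchyUnitary x y) k) -
        ⟪v, rotatedFamily f (cauchyUnitary x y) k⟫_ℂ • v =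
      (y k : ℂ) • rotatedFamily f (cauchyUnitary x y) k := by
  refine map_rotatedFamily_sub_inner_smul hf hT hv (w := fun k => (y k : ℂ)) ?_ k
  rw [star_ofReal_comp, ← map_ofRealHom_diagonal_sub_vecMulVec, ← map_ofRealHom_diagonal,
    cauchyUnitary, ← Matrix.map_mul, ← Matrix.map_mul,
    h.diagonal_sub_vecMulVec_mul_cauchyOrthogonal]

theorem exists_eq_takagiSeq {N : ℕ} {lam mu : Fin N → ℝ} {c : ℕ → ℂ} {Γ Γt : L2 →L[ℂ] L2}
    (hΓ : IsHankelOp c Γ) (hΓt : IsHankelOp (shiftSeq c) Γt) (hlam : HasSimpleSVals Γ N lam)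
    (hmu : HasSimpleSVals Γt N mu) (h : Interlaced lam mu) (hmu₀ : ∀ k, 0 < mu k) :
    ∃ D Q : Fin N → ℂ, (∀ j, ‖D j‖ = lam j) ∧ (∀ k, ‖Q k‖ = mu k) ∧
      c = takagiSeq (fun j => lam j ^ 2) (fun k => mu k ^ 2) D Q := by
  have hlam₀ := h.left_pos hmu₀
  have hsq := h.sq_of_pos hmu₀
  obtain ⟨f, hf, hfΓ, he0⟩ :=
    hΓ.exists_normalized_eigenvectors hΓt hlam hmu hlam₀ (fun k => (hmu₀ k).ne') hsq
  have hg := orthonormal_rotatedFamily hf hsq.cauchyUnitary_conjTranspose_mul_self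
  choose D hDnorm hD using fun j =>
    hlam.exists_takagi_value hΓ (hlam₀ j).le (hf.ne_zero j) (hfΓ j)
  choose Q hQnorm hQ using fun k =>
    hmu.exists_takagi_value hΓt (hmu₀ k).le (hg.ne_zero k) (by
      rw [hΓ.opT_shift_apply hΓt]
      simpa using hsq.map_rotatedFamily_cauchyUnitary hf (T := (opT Γ).toLinearMap)
        (by simpa using hfΓ) he0 k)
  refine ⟨D, Q, hDnorm, hQnorm, hΓ.eq_realizedSeq hΓt hf
    (fun j => norm_pos_iff.mp ((hlam₀ j).trans_eq (hDnorm j).symm)) hD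
    (apply_star_eq_rotatedFamily (mul_eq_one_comm.mp hsq.cauchyUnitary_conjTranspose_mul_self) hQ)
    he0⟩

/-! ### Uniqueness of Takagi data -/

section TakagiUniqueness

variable {ι : Type*} [Fintype ι] {f f' : ι → L2} {s s' : ι → ℂ}

theorem takagiSum_injective (hf : Orthonormal ℂ f) : Function.Injective (takagiSum f) :=
  fun s s' h => funext fun j => smul_left_injective ℂ (hf.ne_zero j) (by
    simpa only [takagiSum_star hf] using congrArg (fun T => T (star (f j))) h)

/-- The Takagi vectors of an operator with simple singular values are determined up to phases by
the eigenlines of `ΓΓ*`, and the phases are fixed by a vector with nonzero coordinates. -/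
theorem eq_of_takagiSum_eq (hf : Orthonormal ℂ f) (hf' : Orthonormal ℂ f')
    (hs : ∀ j, s j ≠ 0) (hinj : Function.Injective fun j => ‖s j‖) (hnorm : ∀ j, ‖s' j‖ = ‖s j‖)
    (h : takagiSum f s = takagiSum f' s') {a : ι → ℂ} (ha : ∀ j, a j ≠ 0)
    (hsum : ∑ j, a j • f j = ∑ j, a j • f' j) : f = f' := by
  have hmem (j : ι) : f' j ∈ Submodule.span ℂ {f j} := by
    rw [← eigenspace_spectralSum (z := fun j => (‖s j‖ : ℂ) ^ 2)
      (T := (opT (takagiSum f s)).toLinearMap) hf (opT_takagiSum_apply hf s)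
      (injective_ofReal_sq (fun j => norm_nonneg (s j)) hinj)
      (pow_ne_zero 2 (Complex.ofReal_ne_zero.mpr (norm_ne_zero_iff.mpr (hs j)))), h]
    exact hnorm j ▸ mem_eigenspace_spectralSum (z := fun j => (‖s' j‖ : ℂ) ^ 2) hf'
      (opT_takagiSum_apply hf' s') j
  choose u hu using fun j => Submodule.mem_span_singleton.mp (hmem j)
  ext1 j
  have hcoord := congrArg (fun v => ⟪f j, v⟫_ℂ) hsum
  simp only [← hu, smul_smul, hf.inner_right_fintype] at hcoord
  rw [← hu, mul_right_eq_self₀.mp hcoord.symm |>.resolve_right (ha j), one_smul]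

end TakagiUniqueness

theorem IsBalanced.sum_smul_takagiVector_apply {ι : Type*} [Fintype ι] [DecidableEq ι]
    {D a : ι → ℂ} {K : Matrix ι ι ℂ} (h : IsBalanced D K a) (n : ℕ) :
    (∑ j, a j • h.takagiVector j : L2) n = realizedSeq D K a n := by
  rw [coeFn_sum_smul_apply]
  exact Finset.sum_congr rfl fun j _ => mul_comm _ _

theorem Interlaced.injective_norm {ι : Type*} [LinearOrder ι] {x y : ι → ℝ} {D : ι → ℂ}
    (h : Interlaced x y) (hD : ∀ j, ‖D j‖ ^ 2 = x j) : Function.Injective fun j => ‖D j‖ :=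
  Function.Injective.of_comp (f := (· ^ 2))
    (by simpa only [Function.comp_def, hD] using h.strictAnti_left.injective)

namespace Interlaced

variable {ι : Type*} [Fintype ι] [DecidableEq ι] [LinearOrder ι] {x y : ι → ℝ}
  {D D' Q Q' : ι → ℂ}

theorem ofReal_cauchyAmplitude_ne_zero (h : Interlaced x y) (j : ι) :
    (cauchyAmplitude x y j : ℂ) ≠ 0 :=
  Complex.ofReal_ne_zero.mpr (h.cauchyAmplitude_pos j).ne'

theorem takagiSeq_injective (h : Interlaced x y) (hy : ∀ k, 0 < y k)
    (hD : ∀ j, ‖D j‖ ^ 2 = x j) (hQ : ∀ k, ‖Q k‖ ^ 2 = y k)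
    (hD' : ∀ j, ‖D' j‖ ^ 2 = x j) (hQ' : ∀ k, ‖Q' k‖ ^ 2 = y k)
    (heq : takagiSeq x y D Q = takagiSeq x y D' Q') : D = D' ∧ Q = Q' := by
  have hB := h.isBalanced hy hD hQ
  have hB' := h.isBalanced hy hD' hQ'
  have ha := h.ofReal_cauchyAmplitude_ne_zero
  have hf := hB.orthonormal_takagiVector (h.injective_norm hD) ha
  have hf' := hB'.orthonormal_takagiVector (h.injective_norm hD') ha
  have hΓ' : IsHankelOp (takagiSeq x y D' Q') _ := hB'.isHankelOp_takagiSum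
  have hΓt' : IsHankelOp (shiftSeq (takagiSeq x y D' Q')) _ :=
    hB'.isHankelOp_takagiSum_rotatedFamily rfl
  rw [← heq] at hΓ' hΓt'
  have hΓ : takagiSum hB.takagiVector D = takagiSum hB'.takagiVector D' :=
    hB.isHankelOp_takagiSum.eq hΓ'
  have hΓt : takagiSum (rotatedFamily hB.takagiVector (cauchyUnitary x y)) Q =
      takagiSum (rotatedFamily hB'.takagiVector (cauchyUnitary x y)) Q' :=
    (hB.isHankelOp_takagiSum_rotatedFamily rfl).eq hΓt'
  have hff' : hB.takagiVector = hB'.takagiVector := by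
    refine eq_of_takagiSum_eq hf hf' hB.ne_zero (h.injective_norm hD) (fun j => ?_) hΓ ha
      (lp.ext (funext fun n => ?_))
    · exact (pow_left_inj₀ (norm_nonneg _) (norm_nonneg _) two_ne_zero).mp
        ((hD' j).trans (hD j).symm)
    · rw [hB.sum_smul_takagiVector_apply, hB'.sum_smul_takagiVector_apply]
      exact congrFun heq n
  rw [← hff'] at hΓ hΓt
  exact ⟨takagiSum_injective hf hΓ, takagiSum_injective
    (orthonormal_rotatedFamily hf h.cauchyUnitary_conjTranspose_mul_self) hΓt⟩

end Interlaced

theorem continuous_realizedSeq {X ι : Type*} [TopologicalSpace X] [Fintype ι] [DecidableEq ι]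
    {D : X → ι → ℂ} {K : X → Matrix ι ι ℂ} (hD : Continuous D) (hD₀ : ∀ t j, D t j ≠ 0)
    (hK : Continuous K) (a : ι → ℂ) (n : ℕ) :
    Continuous fun t => realizedSeq (D t) (K t) a n := by
  have hDinv : Continuous fun t => (D t)⁻¹ :=
    continuous_pi fun j => ((continuous_apply j).comp hD).inv₀ fun t => hD₀ t j
  have hrow : Continuous fun t => a / D t := by
    simp only [div_eq_mul_inv]
    exact continuous_const.mul hDinv
  exact (hrow.matrix_vecMul ((hK.mul hDinv.matrix_diagonal).pow n)).dotProduct continuous_const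

theorem continuous_takagiSeq {X ι : Type*} [TopologicalSpace X] [Fintype ι] [DecidableEq ι]
    (x y : ι → ℝ) {D Q : X → ι → ℂ} (hD : Continuous D) (hD₀ : ∀ t j, D t j ≠ 0)
    (hQ : Continuous Q) (n : ℕ) : Continuous fun t => takagiSeq x y (D t) (Q t) n :=
  continuous_realizedSeq hD hD₀
    ((continuous_const.matrix_mul hQ.matrix_diagonal).matrix_mul continuous_const) _ n

/-! ### The isospectral torus -/

/-- The symbols in `h^{1/2}` whose Hankel operator and shifted Hankel operator have rank `N` and
the simple singular values `lam` and `mu`. -/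
def isospectralSet {N : ℕ} (lam mu : Fin N → ℝ) : Set H12 :=
  {c | ∃ Γ Γt : L2 →L[ℂ] L2, IsHankelOp c.1 Γ ∧ IsHankelOp (shiftSeq c.1) Γt ∧
    HasSimpleSVals Γ N lam ∧ HasSimpleSVals Γt N mu}

/-- The vector with moduli `r` and phases `u`. -/
def phaseVector {ι : Type*} (r : ι → ℝ) (u : ι → Circle) (j : ι) : ℂ := r j * u j

theorem norm_phaseVector {ι : Type*} {r : ι → ℝ} (hr : ∀ j, 0 < r j) (u : ι → Circle) (j : ι) :
    ‖phaseVector r u j‖ = r j := by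
  rw [phaseVector, norm_mul, Circle.norm_coe, mul_one, Complex.norm_of_nonneg (hr j).le]

theorem norm_phaseVector_sq {ι : Type*} (r : ι → ℝ) (u : ι → Circle) (j : ι) :
    ‖phaseVector r u j‖ ^ 2 = r j ^ 2 := by
  rw [phaseVector, norm_mul, Circle.norm_coe, mul_one, Complex.norm_real, Real.norm_eq_abs, sq_abs]

theorem phaseVector_injective {ι : Type*} {r : ι → ℝ} (hr : ∀ j, 0 < r j) :
    Function.Injective (phaseVector r) := fun _ _ h => funext fun j =>
  Circle.coe_injective (mul_left_cancel₀ (Complex.ofReal_ne_zero.mpr (hr j).ne') (congrFun h j))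

theorem exists_phaseVector_eq {ι : Type*} {r : ι → ℝ} (hr : ∀ j, 0 < r j) {D : ι → ℂ}
    (hD : ∀ j, ‖D j‖ = r j) : ∃ u : ι → Circle, phaseVector r u = D := by
  have hr₀ (j : ι) : (r j : ℂ) ≠ 0 := Complex.ofReal_ne_zero.mpr (hr j).ne'
  refine ⟨fun j => ⟨D j / r j, mem_sphere_zero_iff_norm.mpr ?_⟩,
    funext fun j => mul_div_cancel₀ _ (hr₀ j)⟩
  rw [norm_div, hD, Complex.norm_of_nonneg (hr j).le, div_self (hr j).ne']

theorem continuous_phaseVector {ι : Type*} (r : ι → ℝ) : Continuous (phaseVector r) :=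
  continuous_pi fun j =>
    continuous_const.mul (continuous_subtype_val.comp (continuous_apply j))

variable {N : ℕ} {lam mu : Fin N → ℝ}

/-- The sequence with Takagi values `lam j * u j` and shifted Takagi values `mu k * v k`, where
`(u, v)` runs over a torus of phases. -/
def torusSeq (lam mu : Fin N → ℝ) (t : (Fin N → Circle) × (Fin N → Circle)) : ℕ → ℂ :=
  takagiSeq (fun j => lam j ^ 2) (fun k => mu k ^ 2) (phaseVector lam t.1) (phaseVector mu t.2)

theorem continuous_torusSeq (hlam : ∀ j, 0 < lam j) (mu : Fin N → ℝ) (n : ℕ) :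
    Continuous fun t => torusSeq lam mu t n :=
  continuous_takagiSeq _ _ ((continuous_phaseVector lam).comp continuous_fst)
    (fun t j => norm_ne_zero_iff.mp ((norm_phaseVector hlam t.1 j).trans_ne (hlam j).ne'))
    ((continuous_phaseVector mu).comp continuous_snd) n

namespace Interlaced

theorem hasSum_norm_sq_torusSeq (h : Interlaced lam mu) (hmu : ∀ k, 0 < mu k)
    (t : (Fin N → Circle) × (Fin N → Circle)) :
    HasSum (fun n : ℕ => (n + 1) * ‖torusSeq lam mu t n‖ ^ 2) (∑ j, lam j ^ 2) := by
  have hsq := h.sq_of_pos hmu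
  have hD := norm_phaseVector_sq lam t.1
  have hB := hsq.isBalanced (fun k => pow_pos (hmu k) 2) hD (norm_phaseVector_sq mu t.2)
  simpa only [torusSeq, takagiSeq, hD] using
    hB.hasSum_norm_sq_realizedSeq (hsq.injective_norm hD) hsq.ofReal_cauchyAmplitude_ne_zero

theorem torusSeq_injective (h : Interlaced lam mu) (hmu : ∀ k, 0 < mu k) :
    Function.Injective (torusSeq lam mu) := by
  intro s t hst
  obtain ⟨hu, hv⟩ := (h.sq_of_pos hmu).takagiSeq_injective (fun k => pow_pos (hmu k) 2)
    (norm_phaseVector_sq lam s.1) (norm_phaseVector_sq mu s.2)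
    (norm_phaseVector_sq lam t.1) (norm_phaseVector_sq mu t.2) hst
  exact Prod.ext (phaseVector_injective (h.left_pos hmu) hu) (phaseVector_injective hmu hv)

/-- The point of `h^{1/2}` given by `torusSeq`. -/
def torusSymbol (h : Interlaced lam mu) (hmu : ∀ k, 0 < mu k)
    (t : (Fin N → Circle) × (Fin N → Circle)) : H12 :=
  ⟨torusSeq lam mu t, inH12_of_summable (h.hasSum_norm_sq_torusSeq hmu t).summable⟩

/-- On the torus the `h^{1/2}` norm is constant, so coordinatewise continuity suffices. -/
theorem continuous_torusSymbol (h : Interlaced lam mu) (hmu : ∀ k, 0 < mu k) :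
    Continuous (h.torusSymbol hmu) :=
  continuous_of_norm_toL2_eq (r := √(∑ j, lam j ^ 2))
    (continuous_torusSeq (h.left_pos hmu) mu) fun t => by
      rw [← (hasSum_norm_toL2_sq (h.torusSymbol hmu t)).unique (h.hasSum_norm_sq_torusSeq hmu t),
        Real.sqrt_sq (norm_nonneg _)]

theorem torusSymbol_mem_isospectralSet (h : Interlaced lam mu) (hmu : ∀ k, 0 < mu k)
    (t : (Fin N → Circle) × (Fin N → Circle)) : h.torusSymbol hmu t ∈ isospectralSet lam mu := by
  have hsq := h.sq_of_pos hmu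
  have hD := norm_phaseVector_sq lam t.1
  have hB := hsq.isBalanced (fun k => pow_pos (hmu k) 2) hD (norm_phaseVector_sq mu t.2)
  have hf := hB.orthonormal_takagiVector (hsq.injective_norm hD) hsq.ofReal_cauchyAmplitude_ne_zero
  exact ⟨_, _, hB.isHankelOp_takagiSum, hB.isHankelOp_takagiSum_rotatedFamily rfl,
    hasSimpleSVals_takagiSum hf (norm_phaseVector (h.left_pos hmu) t.1) (h.left_pos hmu)
      h.strictAnti_left.injective,
    hasSimpleSVals_takagiSum
      (orthonormal_rotatedFamily hf hsq.cauchyUnitary_conjTranspose_mul_self)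
      (norm_phaseVector hmu t.2) hmu h.strictAnti_right.injective⟩

theorem exists_torusSymbol_eq (h : Interlaced lam mu) (hmu : ∀ k, 0 < mu k) {c : H12}
    (hc : c ∈ isospectralSet lam mu) : ∃ t, h.torusSymbol hmu t = c := by
  obtain ⟨Γ, Γt, hΓ, hΓt, hΓlam, hΓtmu⟩ := hc
  obtain ⟨D, Q, hD, hQ, hcDQ⟩ := exists_eq_takagiSeq hΓ hΓt hΓlam hΓtmu h hmu
  obtain ⟨u, rfl⟩ := exists_phaseVector_eq (h.left_pos hmu) hD
  obtain ⟨v, rfl⟩ := exists_phaseVector_eq hmu hQ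
  exact ⟨(u, v), Subtype.ext hcDQ.symm⟩

/-- The homeomorphism from the torus of phases to the isospectral set: a continuous bijection
from a compact space. -/
def torusHomeomorph (h : Interlaced lam mu) (hmu : ∀ k, 0 < mu k) :
    (Fin N → Circle) × (Fin N → Circle) ≃ₜ isospectralSet lam mu :=
  Continuous.homeoOfEquivCompactToT2
    (f := Equiv.ofBijective
      (Set.codRestrict (h.torusSymbol hmu) _ (h.torusSymbol_mem_isospectralSet hmu))
      ⟨fun _ _ hst => h.torusSeq_injective hmu
          (congrArg (fun c : isospectralSet lam mu => c.1.1) hst),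
        fun c => (h.exists_torusSymbol_eq hmu c.2).imp fun _ ht => Subtype.ext ht⟩)
    ((h.continuous_torusSymbol hmu).codRestrict _)

end Interlaced

/-- Identifies the product of two tori of dimension `N` with the torus of dimension `2 * N`. -/
def circleProdHomeomorphAddCircle (N : ℕ) :
    (Fin N → Circle) × (Fin N → Circle) ≃ₜ (Fin (2 * N) → AddCircle (2 * Real.pi)) :=
  Homeomorph.sumArrowHomeomorphProdArrow.symm.trans <|
    (Homeomorph.piCongrLeft (Y := fun _ => Circle)
      (finSumFinEquiv.trans (finCongr (two_mul N).symm))).trans <|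
    Homeomorph.piCongrRight fun _ => AddCircle.homeomorphCircle'.symm

/-- Given `λ_1 > μ_1 > … > λ_N > μ_N > 0`, the set of `c ∈ h^{1/2}` whose Hankel operator
`Γ_c` has rank `N` with simple positive singular values exactly the `λ_j`, and whose shifted
Hankel operator `Γ̃_c` has rank `N` with simple positive singular values exactly the `μ_j`,
is homeomorphic to the torus `𝕋^{2N}`. -/
theorem statement2 (N : ℕ) (hN : 1 ≤ N) (lam mu : Fin N → ℝ)
    (h1 : ∀ j : Fin N, mu j < lam j)
    (h2 : ∀ j k : Fin N, (j : ℕ) + 1 = (k : ℕ) → lam k < mu j)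
    (h3 : ∀ j : Fin N, 0 < mu j) :
    Nonempty (
      {c : H12 // ∃ Γ Γt : L2 →L[ℂ] L2,
          IsHankelOp c.1 Γ ∧ IsHankelOp (shiftSeq c.1) Γt ∧
          HasSimpleSVals Γ N lam ∧ HasSimpleSVals Γt N mu}
        ≃ₜ (Fin (2 * N) → AddCircle (2 * Real.pi))) := by
  have h : Interlaced lam mu := .of_consecutive h1 h2
  exact ⟨(h.torusHomeomorph h3).symm.trans (circleProdHomeomorphAddCircle N)⟩

end
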